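/- arXiv:1607.08276 — 6 statements merged into one kernel-verified Lean document; each statement's English description precedes it below -/
import Mathlib

section
/- Let A be a 3-Lie algebra over a field F with char F ≠ 2 and let (V, ρ) be a representation of A. Then for all x, y, z, u ∈ A, as linear maps V → V: ρ(x,u)∘ρ(y,z) + ρ(y,z)∘ρ(x,u) + ρ(x,y)∘ρ(z,u) + ρ(z,u)∘ρ(x,y) − ρ(x,z)∘ρ(y,u) − ρ(y,u)∘ρ(x,z) = 0. -/
/-- A trilinear skew-symmetric bracket satisfying the fundamental identity,
i.e. a 3-Lie algebra structure on `A` over the field `F`.  (Linearity in the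
first argument together with skew-symmetry yields trilinearity.) -/
def IsThreeLieBracket (F : Type*) [Field F] {A : Type*} [AddCommGroup A] [Module F A]
    (br : A → A → A → A) : Prop :=
  (∀ x x' y z : A, br (x + x') y z = br x y z + br x' y z) ∧
  (∀ (c : F) (x y z : A), br (c • x) y z = c • br x y z) ∧
  (∀ x y z : A, br y x z = - br x y z) ∧
  (∀ x y z : A, br x z y = - br x y z) ∧
  (∀ x y z u v : A, br (br x y z) u v =
      br (br x u v) y z + br x (br y u v) z + br x y (br z u v))

/-- A derivation of a 3-Lie algebra `(A, br)`. -/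
def IsDer3 (F : Type*) [Field F] {A : Type*} [AddCommGroup A] [Module F A]
    (br : A → A → A → A) (d : A →ₗ[F] A) : Prop :=
  ∀ x y z : A, d (br x y z) = br (d x) y z + br x (d y) z + br x y (d z)

/-- A representation of the 3-Lie algebra `(A, br)` on the vector space `V`. -/
def IsRep3 (F : Type*) [Field F] {A V : Type*} [AddCommGroup A] [Module F A]
    [AddCommGroup V] [Module F V]
    (br : A → A → A → A) (ρ : A →ₗ[F] A →ₗ[F] Module.End F V) : Prop :=
  (∀ x y : A, ρ x y = - ρ y x) ∧
  (∀ x1 x2 x3 x4 : A, ρ x1 x2 * ρ x3 x4 - ρ x3 x4 * ρ x1 x2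
      = ρ (br x1 x2 x3) x4 - ρ (br x1 x2 x4) x3) ∧
  (∀ x1 x2 x3 x4 : A, ρ (br x1 x2 x3) x4
      = ρ x1 x2 * ρ x3 x4 + ρ x2 x3 * ρ x1 x4 + ρ x3 x1 * ρ x2 x4)

/-- The bracket of the `(μ, ρ, β)`-extension of `H` by `M`, on `M ⊕ H`:
the unique trilinear skew-symmetric bracket with `[x,y,z] = [x,y,z]_M + μ(x,y,z)`,
`[x,y,h] = ρ(x,y)h`, `[x,h₁,h₂] = β(x,h₁)h₂` and `[h₁,h₂,h₃] = [h₁,h₂,h₃]_H`. -/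
def extBr (F : Type*) [Field F] {M H : Type*} [AddCommGroup M] [Module F M]
    [AddCommGroup H] [Module F H]
    (brM : M → M → M → M) (brH : H → H → H → H)
    (μ : M →ₗ[F] M →ₗ[F] M →ₗ[F] H)
    (ρ : M →ₗ[F] M →ₗ[F] Module.End F H)
    (β : M →ₗ[F] H →ₗ[F] Module.End F H) :
    M × H → M × H → M × H → M × H :=
  fun a b c =>
    (brM a.1 b.1 c.1,
     μ a.1 b.1 c.1 + ρ a.1 b.1 c.2 + ρ c.1 a.1 b.2 + ρ b.1 c.1 a.2
       + β a.1 b.2 c.2 + β b.1 c.2 a.2 + β c.1 a.2 b.2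
       + brH a.2 b.2 c.2)

/-- The bracket of the exterior direct sum 3-Lie algebra `A³ = A × A × A`. -/
def tripleBr {A : Type*} [AddCommGroup A]
    (br : A → A → A → A) : A × A × A → A × A × A → A × A × A → A × A × A :=
  fun a b c =>
    (br a.1 b.2.1 c.2.1 + br b.1 c.2.1 a.2.1 + br c.1 a.2.1 b.2.1,
     br a.2.1 b.2.1 c.2.1,
     br a.2.2 b.2.2 c.2.2)

section AnticommutatorIdentity

variable {A R : Type*} [NonUnitalNonAssocRing R] {br : A → A → A → A} {ρ : A → A → R}

theorem map_bracket_sub_map_bracket (skew : ∀ x y, ρ x y = -ρ y x)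
    (map_bracket : ∀ x y z u,
      ρ (br x y z) u = ρ x y * ρ z u + ρ y z * ρ x u + ρ z x * ρ y u)
    (x y z u : A) :
    ρ (br x y z) u - ρ (br x y u) z =
      2 • (ρ x y * ρ z u) + (ρ x u * ρ y z + ρ y z * ρ x u)
        - (ρ x z * ρ y u + ρ y u * ρ x z) := by
  rw [map_bracket x y z u, map_bracket x y u z, skew z x, skew u z, skew u x]
  simp only [neg_mul, mul_neg]
  abel

-- The two bracket axioms expand the commutator of `ρ x y` and `ρ z u` in two ways;
-- their difference is the identity.
theorem stmt1_general (skew : ∀ x y, ρ x y = -ρ y x)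
    (commutator : ∀ x y z u,
      ρ x y * ρ z u - ρ z u * ρ x y = ρ (br x y z) u - ρ (br x y u) z)
    (map_bracket : ∀ x y z u,
      ρ (br x y z) u = ρ x y * ρ z u + ρ y z * ρ x u + ρ z x * ρ y u)
    (x y z u : A) :
    ρ x u * ρ y z + ρ y z * ρ x u + ρ x y * ρ z u + ρ z u * ρ x y
      - ρ x z * ρ y u - ρ y u * ρ x z = 0 := by
  have expansion := (commutator x y z u).trans
    (map_bracket_sub_map_bracket skew map_bracket x y z u)
  calc
    _ = (2 • (ρ x y * ρ z u) + (ρ x u * ρ y z + ρ y z * ρ x u)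
          - (ρ x z * ρ y u + ρ y u * ρ x z))
        - (ρ x y * ρ z u - ρ z u * ρ x y) := by abel
    _ = 0 := sub_eq_zero.mpr expansion.symm

end AnticommutatorIdentity

/-- Lemma 2.1, Eq. (4): for a representation `(V, ρ)` of a 3-Lie algebra `A`,
`ρ(x,u)ρ(y,z) + ρ(y,z)ρ(x,u) + ρ(x,y)ρ(z,u) + ρ(z,u)ρ(x,y)
  − ρ(x,z)ρ(y,u) − ρ(y,u)ρ(x,z) = 0` as linear maps `V → V`. -/
theorem stmt1 {F A V : Type*} [Field F] [AddCommGroup A] [Module F A]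
    [AddCommGroup V] [Module F V] (hchar : (2 : F) ≠ 0)
    (br : A → A → A → A) (hbr : IsThreeLieBracket F br)
    (ρ : A →ₗ[F] A →ₗ[F] Module.End F V) (hρ : IsRep3 F br ρ)
    (x y z u : A) :
    ρ x u * ρ y z + ρ y z * ρ x u + ρ x y * ρ z u + ρ z u * ρ x y
      - ρ x z * ρ y u - ρ y u * ρ x z = 0 :=
  let ⟨skew, commutator, map_bracket⟩ := hρ
  stmt1_general skew commutator map_bracket x y z u
end

section
/- Let M and H be 3-Lie algebras over a field F with char F ≠ 2, let ρ : M × M → Der(H) be bilinear skew-symmetric, β : M × H → Der(H) bilinear, and μ : M × M × M → H trilinear skew-symmetric. Assume that for all x1,x2,x3,x4 ∈ M, as linear maps H → H: ρ(x4,[x1,x2,x3]) = ρ(x3,x1)∘ρ(x4,x2) − ρ(x2,x1)∘ρ(x4,x3) + ρ(x2,x3)∘ρ(x4,x1) − β(x4, μ(x1,x2,x3)). Then the identity ρ(x,u)∘ρ(y,z) + ρ(y,z)∘ρ(x,u) + ρ(x,y)∘ρ(z,u) + ρ(z,u)∘ρ(x,y) − ρ(x,z)∘ρ(y,u) − ρ(y,u)∘ρ(x,z)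 = 0 holds for all x,y,z,u ∈ M if and only if for all x1,x2,x3,x4 ∈ M: ρ(x4,[x1,x2,x3]) = ρ(x3,[x1,x2,x4]) − β(x4, μ(x1,x2,x3)) + β(x3, μ(x1,x2,x4)) − ρ(x1,x2)∘ρ(x3,x4) + ρ(x3,x4)∘ρ(x1,x2). -/
/-!
Write `Φ(w; x, y, z) = ρ(w, [x, y, z]) + β(w, μ(x, y, z))`. The hypothesis expresses `Φ` through `ρ`
alone, as the cyclic sum `∑ ρ(x, y) ρ(w, z)` over `x, y, z`, while the second identity is
`Φ(w; x, y, z) - Φ(z; x, y, w) + ⁅ρ(x, y), ρ(z, w)⁆ = 0`. In the difference of the two cyclic sums,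
the terms `ρ(x, y) ρ(w, z)` and `ρ(x, y) ρ(z, w)` add up to `-2 ρ(x, y) ρ(z, w)`, which the
commutator turns into an anticommutator, and the other four terms already pair up into
anticommutators. The left-hand side is thus minus the symmetrised Plücker expression in the first
identity.
-/

section SkewFamily

variable {M E : Type*} [NonUnitalNonAssocRing E]

/-- The sum of `ρ x y * ρ w z` over the cyclic permutations of `x, y, z`: the value that a
representation `ρ` of a 3-Lie algebra takes at `w` and the bracket of `x, y, z`. -/
def cyclicSum (ρ : M → M → E) (w x y z : M) : E :=
  ρ x y * ρ w z + ρ y z * ρ w x + ρ z x * ρ w y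

/-- The Plücker expression `ρ(x, y) ρ(z, u) - ρ(x, z) ρ(y, u) + ρ(x, u) ρ(y, z)` with each product
replaced by an anticommutator, as the values of `ρ` need not commute. It measures the failure of
the first identity of `stmt2`, whose order of terms it follows. -/
def symmPlucker (ρ : M → M → E) (x y z u : M) : E :=
  ρ x u * ρ y z + ρ y z * ρ x u + ρ x y * ρ z u + ρ z u * ρ x y
    - ρ x z * ρ y u - ρ y u * ρ x z

theorem cyclicSum_sub_cyclicSum_add_lie {ρ : M → M → E} (hρ : ∀ x y, ρ x y = -ρ y x)
    (x y z w : M) :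
    cyclicSum ρ w x y z - cyclicSum ρ z x y w + ⁅ρ x y, ρ z w⁆ = -symmPlucker ρ x y z w := by
  simp only [cyclicSum, symmPlucker, Ring.lie_def]
  rw [hρ w z, hρ w x, hρ w y, hρ z x, hρ z y]
  simp only [mul_neg, neg_mul, neg_neg]
  abel

variable {H : Type*}

theorem stmt2_general (br : M → M → M → M) (ρ : M → M → E) (hρ : ∀ x y, ρ x y = -ρ y x)
    (β : M → H → E) (μ : M → M → M → H)
    (hbr : ∀ x₁ x₂ x₃ x₄,
      ρ x₄ (br x₁ x₂ x₃)
        = ρ x₃ x₁ * ρ x₄ x₂ - ρ x₂ x₁ * ρ x₄ x₃ + ρ x₂ x₃ * ρ x₄ x₁ - β x₄ (μ x₁ x₂ x₃)) :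
    (∀ x y z u,
        ρ x u * ρ y z + ρ y z * ρ x u + ρ x y * ρ z u + ρ z u * ρ x y
          - ρ x z * ρ y u - ρ y u * ρ x z = 0)
    ↔ (∀ x₁ x₂ x₃ x₄,
        ρ x₄ (br x₁ x₂ x₃)
          = ρ x₃ (br x₁ x₂ x₄) - β x₄ (μ x₁ x₂ x₃) + β x₃ (μ x₁ x₂ x₄)
            - ρ x₁ x₂ * ρ x₃ x₄ + ρ x₃ x₄ * ρ x₁ x₂) := by
  have cyclic (x y z w : M) : ρ w (br x y z) + β w (μ x y z) = cyclicSum ρ w x y z := by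
    rw [hbr, hρ y x, neg_mul, cyclicSum]
    abel
  have sub_eq_neg_symmPlucker (x y z w : M) :
      ρ w (br x y z)
        - (ρ z (br x y w) - β w (μ x y z) + β z (μ x y w) - ρ x y * ρ z w + ρ z w * ρ x y)
        = -symmPlucker ρ x y z w := by
    rw [← cyclicSum_sub_cyclicSum_add_lie hρ, ← cyclic, ← cyclic, Ring.lie_def]
    abel
  refine forall₄_congr fun x y z w ↦ ?_
  rw [← sub_eq_zero (a := ρ w (br x y z)), sub_eq_neg_symmPlucker, neg_eq_zero, symmPlucker]

end SkewFamily

/-- Lemma 3.2: under Eq. (7), identity (4) holds iff Eq. (8) holds. -/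
theorem stmt2 {F M H : Type*} [Field F] [AddCommGroup M] [Module F M]
    [AddCommGroup H] [Module F H] (hchar : (2 : F) ≠ 0)
    (brM : M → M → M → M) (hM : IsThreeLieBracket F brM)
    (brH : H → H → H → H) (hH : IsThreeLieBracket F brH)
    (ρ : M →ₗ[F] M →ₗ[F] Module.End F H)
    (hρskew : ∀ x y : M, ρ x y = - ρ y x)
    (hρder : ∀ x y : M, IsDer3 F brH (ρ x y))
    (β : M →ₗ[F] H →ₗ[F] Module.End F H)
    (hβder : ∀ (x : M) (h : H), IsDer3 F brH (β x h))
    (μ : M →ₗ[F] M →ₗ[F] M →ₗ[F] H)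
    (hμ12 : ∀ x y z : M, μ y x z = - μ x y z)
    (hμ23 : ∀ x y z : M, μ x z y = - μ x y z)
    (hb2 : ∀ x1 x2 x3 x4 : M,
      ρ x4 (brM x1 x2 x3)
        = ρ x3 x1 * ρ x4 x2 - ρ x2 x1 * ρ x4 x3 + ρ x2 x3 * ρ x4 x1
          - β x4 (μ x1 x2 x3)) :
    (∀ x y z u : M,
        ρ x u * ρ y z + ρ y z * ρ x u + ρ x y * ρ z u + ρ z u * ρ x y
          - ρ x z * ρ y u - ρ y u * ρ x z = 0)
    ↔ (∀ x1 x2 x3 x4 : M,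
        ρ x4 (brM x1 x2 x3)
          = ρ x3 (brM x1 x2 x4) - β x4 (μ x1 x2 x3) + β x3 (μ x1 x2 x4)
            - ρ x1 x2 * ρ x3 x4 + ρ x3 x4 * ρ x1 x2) := by
  exact stmt2_general brM (ρ · ·) hρskew (β · ·) (μ · · ·) hb2
end

section
/- Let A = M ⊕ H be the (μ,ρ,β)-extension of H by M. Then A is a 3-Lie algebra if and only if the following identities hold for all x1,x2,x3,x4,x5, x, y, z, u ∈ M and h, h1, h2, h3, h4 ∈ H: (i) ρ(x,u)∘ρ(y,z) + ρ(y,z)∘ρ(x,u) + ρ(x,y)∘ρ(z,u) + ρ(z,u)∘ρ(x,y) − ρ(x,z)∘ρ(y,u) − ρ(y,u)∘ρ(x,z) = 0; (ii) ρ(x4,[x1,x2,x3]_M) = ρ(x3,x1)∘ρ(x4,x2) − ρ(x2,x1)∘ρ(x4,x3) + ρ(x2,x3)∘ρ(x4,x1) − β(x4, μ(x1,x2,x3)); (iii) β(y,h2)β(x,h1)h − β(y,h)β(x,h1)h2 − β(x,h1)β(y,h2)h = [ρ(x,y)h1, h2, h]_H; (iv) [β(x,h1)h3, h2, h4]_H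 + [h3, β(x,h1)h2, h4]_H + [β(x,h3)h2, h1, h4]_H = β(x,[h1,h2,h3]_H)h4; (v) [μ(x1,x2,x3), h1, h2]_H = ρ(x2,x3)β(x1,h1)h2 − ρ(x1,x3)β(x2,h1)h2 + ρ(x1,x2)β(x3,h1)h2 − β([x1,x2,x3]_M, h1)h2; (vi) β(x1,h1)ρ(x2,x3)h2 + β(x3,h2)ρ(x1,x2)h1 = ρ(x2,x3)β(x1,h1)h2 + β(x2,h2)ρ(x1,x3)h1; (vii) μ(x1,x2,[x3,x4,x5]_M) − μ([x1,x2,x3]_M,x4,x5) − μ(x3,[x1,x2,x4]_M,x5) − μ(x3,x4,[x1,x2,x5]_M) = ρ(x3,x4)μ(x1,x2,x5) − ρ(x3,x5)μ(x1,x2,x4) − ρ(x1,x2)μ(x3,x4,x5) + ρ(x4,x5)μ(x1,x2,x3). -/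
/- Call `[u, v, [x, y, z]]` minus its three derivation terms the defect of a bracket. The defect of
`M ⊕ H` is skew-trilinear in `x, y, z` and skew-bilinear in `u, v`, so it vanishes as soon as it
vanishes in the twelve cases where each argument lies in `M` or in `H`. Seven of these cases amount
to (i)–(vii), where (i) is read modulo (ii), (iv) modulo the derivation property of `β(x, h)`, and
(vii) modulo the fundamental identity of `M`. Three more say that `ρ(x, y)` and `β(x, h)` are
derivations and that `H` is a 3-Lie algebra. The remaining two are redundant: `u, v, x ∈ M`,
`y, z ∈ H` follows from (v) and (vi), and `u, v, z ∈ H`, `x, y ∈ M` from (iii) and the derivation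
property of `ρ(x, y)`. -/

/-- Skew-symmetric trilinear maps. As in `IsThreeLieBracket`, skew-symmetry under the two adjacent
transpositions makes linearity in the first argument sufficient. -/
structure IsSkewTrilinear (R : Type*) [CommRing R] {A B : Type*} [AddCommGroup A] [Module R A]
    [AddCommGroup B] [Module R B] (f : A → A → A → B) : Prop where
  add_left : ∀ x x' y z, f (x + x') y z = f x y z + f x' y z
  smul_left : ∀ (c : R) x y z, f (c • x) y z = c • f x y z
  swap_left : ∀ x y z, f y x z = -f x y z
  swap_right : ∀ x y z, f x z y = -f x y z

namespace IsSkewTrilinear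

variable {R A B : Type*} [CommRing R] [AddCommGroup A] [Module R A] [AddCommGroup B] [Module R B]
  {f : A → A → A → B}

theorem rotate (hf : IsSkewTrilinear R f) (x y z : A) : f y z x = f x y z := by
  rw [hf.swap_right y x z, hf.swap_left x y z, neg_neg]

theorem add_middle (hf : IsSkewTrilinear R f) (x y y' z : A) :
    f x (y + y') z = f x y z + f x y' z := by
  simp only [← hf.rotate x, hf.add_left]

theorem add_right (hf : IsSkewTrilinear R f) (x y z z' : A) :
    f x y (z + z') = f x y z + f x y z' := by
  simp only [hf.rotate _ x y, hf.add_left]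

theorem smul_middle (hf : IsSkewTrilinear R f) (c : R) (x y z : A) :
    f x (c • y) z = c • f x y z := by
  simp only [← hf.rotate x, hf.smul_left]

theorem smul_right (hf : IsSkewTrilinear R f) (c : R) (x y z : A) :
    f x y (c • z) = c • f x y z := by
  simp only [hf.rotate _ x y, hf.smul_left]

theorem zero_left (hf : IsSkewTrilinear R f) (y z : A) : f 0 y z = 0 := by
  simpa using hf.smul_left 0 0 y z

theorem zero_middle (hf : IsSkewTrilinear R f) (x z : A) : f x 0 z = 0 := by
  simpa using hf.smul_middle 0 x 0 z

theorem zero_right (hf : IsSkewTrilinear R f) (x y : A) : f x y 0 = 0 := by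
  simpa using hf.smul_right 0 x y 0

theorem neg_left (hf : IsSkewTrilinear R f) (x y z : A) : f (-x) y z = -f x y z := by
  simpa using hf.smul_left (-1) x y z

theorem neg_right (hf : IsSkewTrilinear R f) (x y z : A) : f x y (-z) = -f x y z := by
  simpa using hf.smul_right (-1) x y z

theorem eq_zero_of_pure {M H : Type*} [AddCommGroup M] [Module R M] [AddCommGroup H] [Module R H]
    {f : M × H → M × H → M × H → B} (hf : IsSkewTrilinear R f)
    (mmm : ∀ x y z : M, f (x, 0) (y, 0) (z, 0) = 0)
    (mmh : ∀ (x y : M) (h : H), f (x, 0) (y, 0) (0, h) = 0)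
    (mhh : ∀ (x : M) (h k : H), f (x, 0) (0, h) (0, k) = 0)
    (hhh : ∀ h k l : H, f (0, h) (0, k) (0, l) = 0) (a b c : M × H) : f a b c = 0 := by
  have decomp (p : M × H) : p = (p.1, 0) + (0, p.2) := by simp
  have mhm (x : M) (h : H) (y : M) : f (x, 0) (0, h) (y, 0) = 0 := by
    rw [hf.swap_right, mmh, neg_zero]
  have hmm (h : H) (x y : M) : f (0, h) (x, 0) (y, 0) = 0 := by
    rw [← hf.rotate, mmh]
  have hmh (h : H) (x : M) (k : H) : f (0, h) (x, 0) (0, k) = 0 := by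
    rw [hf.swap_left, mhh, neg_zero]
  have hhm (h k : H) (x : M) : f (0, h) (0, k) (x, 0) = 0 := by
    rw [hf.rotate, mhh]
  rw [decomp a, decomp b, decomp c]
  simp only [hf.add_left, hf.add_middle, hf.add_right, mmm, mmh, mhm, mhh, hmm, hmh, hhm, hhh,
    add_zero]

end IsSkewTrilinear

/-- The failure of `ad (u, v) = [u, v, ·]` to be a derivation of the bracket. All inner brackets are
rotated into the last argument, so the correction terms are cyclic in `x, y, z`. -/
def fundamentalDefect {A : Type*} [AddCommGroup A] (br : A → A → A → A) (u v x y z : A) : A :=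
  br u v (br x y z) - br y z (br u v x) - br z x (br u v y) - br x y (br u v z)

namespace IsSkewTrilinear

variable {R A : Type*} [CommRing R] [AddCommGroup A] [Module R A] {br : A → A → A → A}

theorem fundamentalDefect_eq_zero_iff (hbr : IsSkewTrilinear R br) (x y z u v : A) :
    fundamentalDefect br u v x y z = 0 ↔
      br (br x y z) u v = br (br x u v) y z + br x (br y u v) z + br x y (br z u v) := by
  rw [fundamentalDefect, sub_sub, sub_sub, sub_eq_zero, hbr.rotate (br x y z), hbr.rotate x u v,
    hbr.rotate y u v, hbr.rotate z u v, hbr.rotate (br x u v) y z, hbr.rotate (br y u v) z x,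
    hbr.rotate x (br y u v) z, add_assoc]

theorem fundamentalDefect_add_left (hbr : IsSkewTrilinear R br)
    (u u' v x y z : A) : fundamentalDefect br (u + u') v x y z =
      fundamentalDefect br u v x y z + fundamentalDefect br u' v x y z := by
  simp only [fundamentalDefect, hbr.add_left, hbr.add_right]
  abel

theorem fundamentalDefect_swap_left (hbr : IsSkewTrilinear R br)
    (u v x y z : A) : fundamentalDefect br v u x y z = -fundamentalDefect br u v x y z := by
  simp only [fundamentalDefect, hbr.swap_left u v, hbr.neg_right]
  abel

theorem isSkewTrilinear_fundamentalDefect (hbr : IsSkewTrilinear R br) (u v : A) :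
    IsSkewTrilinear R (fundamentalDefect br u v) where
  add_left x x' y z := by
    simp only [fundamentalDefect, hbr.add_left, hbr.add_middle, hbr.add_right]
    abel
  smul_left c x y z := by
    simp only [fundamentalDefect, hbr.smul_left, hbr.smul_middle, hbr.smul_right, smul_sub]
  swap_left x y z := by
    simp only [fundamentalDefect, hbr.swap_left x y, hbr.swap_left y z, hbr.swap_left z x,
      hbr.neg_right]
    abel
  swap_right x y z := by
    simp only [fundamentalDefect, hbr.swap_right x y, hbr.swap_left x y, hbr.swap_left y z,
      hbr.swap_left z x, hbr.neg_right]
    abel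

theorem fundamentalDefect_eq_zero_of_pure_left {M H : Type*} [AddCommGroup M]
    [Module R M] [AddCommGroup H] [Module R H] {br : M × H → M × H → M × H → M × H}
    (hbr : IsSkewTrilinear R br)
    (mm : ∀ (u v : M) (a b c : M × H), fundamentalDefect br (u, 0) (v, 0) a b c = 0)
    (mh : ∀ (u : M) (h : H) (a b c : M × H), fundamentalDefect br (u, 0) (0, h) a b c = 0)
    (hh : ∀ (h k : H) (a b c : M × H), fundamentalDefect br (0, h) (0, k) a b c = 0)
    (p q a b c : M × H) : fundamentalDefect br p q a b c = 0 := by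
  have decomp (r : M × H) : r = (r.1, 0) + (0, r.2) := by simp
  rw [decomp p, hbr.fundamentalDefect_add_left, hbr.fundamentalDefect_swap_left q,
    hbr.fundamentalDefect_swap_left q, decomp q]
  simp only [hbr.fundamentalDefect_add_left, hbr.fundamentalDefect_swap_left (_, 0) (0, _),
    mm, mh, hh, neg_zero, add_zero]

end IsSkewTrilinear

section ThreeLieBracket

variable {F A : Type*} [Field F] [AddCommGroup A] [Module F A] {br : A → A → A → A}

theorem IsThreeLieBracket.isSkewTrilinear (hbr : IsThreeLieBracket F br) : IsSkewTrilinear F br :=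
  ⟨hbr.1, hbr.2.1, hbr.2.2.1, hbr.2.2.2.1⟩

theorem IsSkewTrilinear.isThreeLieBracket_iff (hbr : IsSkewTrilinear F br) :
    IsThreeLieBracket F br ↔ ∀ u v x y z, fundamentalDefect br u v x y z = 0 := by
  simp only [hbr.fundamentalDefect_eq_zero_iff]
  exact ⟨fun h u v x y z => h.2.2.2.2 x y z u v,
    fun h => ⟨hbr.add_left, hbr.smul_left, hbr.swap_left, hbr.swap_right,
      fun x y z u v => h u v x y z⟩⟩

theorem IsSkewTrilinear.isDer3_apply (hbr : IsSkewTrilinear F br) {d : A →ₗ[F] A}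
    (hd : IsDer3 F br d) (x y z : A) :
    d (br x y z) = br y z (d x) + br z x (d y) + br x y (d z) := by
  rw [hd, hbr.rotate (d x) y z, hbr.rotate (d y) z x, hbr.rotate x (d y) z]

end ThreeLieBracket

/-- The skew-symmetries of the data `([·,·,·]_M, [·,·,·]_H, μ, ρ, β)` which make the bracket of the
`(μ, ρ, β)`-extension skew-symmetric; the fundamental identities of `M` and `H` and the derivation
conditions on `ρ` and `β` are not part of this notion. -/
structure IsSkewExtensionDatum (F : Type*) [Field F] {M H : Type*} [AddCommGroup M] [Module F M]
    [AddCommGroup H] [Module F H] (brM : M → M → M → M) (brH : H → H → H → H)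
    (μ : M →ₗ[F] M →ₗ[F] M →ₗ[F] H) (ρ : M →ₗ[F] M →ₗ[F] Module.End F H)
    (β : M →ₗ[F] H →ₗ[F] Module.End F H) : Prop where
  brM_skew : IsSkewTrilinear F brM
  brH_skew : IsSkewTrilinear F brH
  μ_swap_left : ∀ x y z, μ y x z = -μ x y z
  μ_swap_right : ∀ x y z, μ x z y = -μ x y z
  ρ_swap : ∀ x y, ρ x y = -ρ y x
  β_swap : ∀ x h k, β x h k = -β x k h

namespace IsSkewExtensionDatum

variable {F M H : Type*} [Field F] [AddCommGroup M] [Module F M] [AddCommGroup H] [Module F H]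
  {brM : M → M → M → M} {brH : H → H → H → H}
  {μ : M →ₗ[F] M →ₗ[F] M →ₗ[F] H} {ρ : M →ₗ[F] M →ₗ[F] Module.End F H}
  {β : M →ₗ[F] H →ₗ[F] Module.End F H}

theorem ρ_swap_apply (D : IsSkewExtensionDatum F brM brH μ ρ β) (x y : M) (h : H) :
    ρ x y h = -ρ y x h := by
  rw [D.ρ_swap x y, LinearMap.neg_apply]

theorem μ_rotate (D : IsSkewExtensionDatum F brM brH μ ρ β) (x y z : M) :
    μ y z x = μ x y z := by
  rw [D.μ_swap_right y x z, D.μ_swap_left x y z, neg_neg]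

theorem isSkewTrilinear_extBr (D : IsSkewExtensionDatum F brM brH μ ρ β) :
    IsSkewTrilinear F (extBr F brM brH μ ρ β) where
  add_left a a' b c := by
    ext
    · exact D.brM_skew.add_left ..
    · simp only [extBr, Prod.fst_add, Prod.snd_add, map_add, LinearMap.add_apply,
        D.brH_skew.add_left]
      abel
  smul_left r a b c := by
    ext
    · exact D.brM_skew.smul_left ..
    · simp only [extBr, Prod.smul_fst, Prod.smul_snd, map_smul, LinearMap.smul_apply,
        D.brH_skew.smul_left, smul_add]
  swap_left a b c := by
    ext
    · exact D.brM_skew.swap_left ..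
    · simp only [extBr, Prod.snd_neg]
      rw [D.μ_swap_left a.1, D.ρ_swap_apply b.1 a.1, D.ρ_swap_apply c.1 b.1,
        D.ρ_swap_apply a.1 c.1, D.β_swap b.1, D.β_swap a.1, D.β_swap c.1, D.brH_skew.swap_left a.2]
      abel
  swap_right a b c := by
    ext
    · exact D.brM_skew.swap_right ..
    · simp only [extBr, Prod.snd_neg]
      rw [D.μ_swap_right a.1, D.ρ_swap_apply b.1 a.1, D.ρ_swap_apply c.1 b.1,
        D.ρ_swap_apply a.1 c.1, D.β_swap b.1, D.β_swap a.1, D.β_swap c.1,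
        D.brH_skew.swap_right a.2]
      abel

theorem extBr_mm (D : IsSkewExtensionDatum F brM brH μ ρ β) (x y : M) (a : M × H) :
    extBr F brM brH μ ρ β (x, 0) (y, 0) a = (brM x y a.1, μ x y a.1 + ρ x y a.2) := by
  simp [extBr, D.brH_skew.zero_left]

theorem extBr_mh (D : IsSkewExtensionDatum F brM brH μ ρ β) (x : M) (h : H) (a : M × H) :
    extBr F brM brH μ ρ β (x, 0) (0, h) a = (0, ρ a.1 x h + β x h a.2) := by
  simp [extBr, D.brM_skew.zero_middle, D.brH_skew.zero_left]

theorem extBr_hm (D : IsSkewExtensionDatum F brM brH μ ρ β) (h : H) (x : M) (a : M × H) :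
    extBr F brM brH μ ρ β (0, h) (x, 0) a = (0, ρ x a.1 h - β x h a.2) := by
  simp [extBr, D.brM_skew.zero_left, D.brH_skew.zero_middle, D.β_swap x a.2 h, sub_eq_add_neg]

theorem extBr_hh (D : IsSkewExtensionDatum F brM brH μ ρ β) (h k : H) (a : M × H) :
    extBr F brM brH μ ρ β (0, h) (0, k) a = (0, β a.1 h k + brH h k a.2) := by
  simp [extBr, D.brM_skew.zero_left]

local notation "Δ" => fundamentalDefect (extBr F brM brH μ ρ β)

/- The suffix `uv_xyz` of the lemmas below records in which summand, `M` or `H`, each of the five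
arguments of `Δ u v x y z` lies. -/

theorem fundamentalDefect_mm_mmm_eq_zero_iff (D : IsSkewExtensionDatum F brM brH μ ρ β)
    (x₁ x₂ x₃ x₄ x₅ : M) (hM : fundamentalDefect brM x₁ x₂ x₃ x₄ x₅ = 0) :
    Δ (x₁, 0) (x₂, 0) (x₃, 0) (x₄, 0) (x₅, 0) = 0 ↔
      μ x₁ x₂ (brM x₃ x₄ x₅) - μ (brM x₁ x₂ x₃) x₄ x₅ - μ x₃ (brM x₁ x₂ x₄) x₅
          - μ x₃ x₄ (brM x₁ x₂ x₅)
        = ρ x₃ x₄ (μ x₁ x₂ x₅) - ρ x₃ x₅ (μ x₁ x₂ x₄) - ρ x₁ x₂ (μ x₃ x₄ x₅)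
          + ρ x₄ x₅ (μ x₁ x₂ x₃) := by
  have value : Δ (x₁, 0) (x₂, 0) (x₃, 0) (x₄, 0) (x₅, 0) =
      (fundamentalDefect brM x₁ x₂ x₃ x₄ x₅,
        μ x₁ x₂ (brM x₃ x₄ x₅) + ρ x₁ x₂ (μ x₃ x₄ x₅)
          - (μ x₄ x₅ (brM x₁ x₂ x₃) + ρ x₄ x₅ (μ x₁ x₂ x₃))
          - (μ x₅ x₃ (brM x₁ x₂ x₄) + ρ x₅ x₃ (μ x₁ x₂ x₄))
          - (μ x₃ x₄ (brM x₁ x₂ x₅) + ρ x₃ x₄ (μ x₁ x₂ x₅))) := by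
    simp [fundamentalDefect, D.extBr_mm]
  rw [value, hM, Prod.mk_eq_zero, and_iff_right rfl, D.μ_rotate (brM x₁ x₂ x₃) x₄ x₅,
    ← D.μ_rotate x₅ x₃, D.ρ_swap_apply x₅ x₃]
  constructor <;> intro e <;> linear_combination (norm := module) e

theorem fundamentalDefect_mh_mmm_eq_zero_iff (D : IsSkewExtensionDatum F brM brH μ ρ β)
    (x₁ x₂ x₃ x₄ : M) :
    (∀ h, Δ (x₄, 0) (0, h) (x₁, 0) (x₂, 0) (x₃, 0) = 0) ↔
      ρ x₄ (brM x₁ x₂ x₃) = ρ x₃ x₁ * ρ x₄ x₂ - ρ x₂ x₁ * ρ x₄ x₃ + ρ x₂ x₃ * ρ x₄ x₁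
        - β x₄ (μ x₁ x₂ x₃) := by
  have value (h : H) : Δ (x₄, 0) (0, h) (x₁, 0) (x₂, 0) (x₃, 0) =
      (0, ρ (brM x₁ x₂ x₃) x₄ h + β x₄ h (μ x₁ x₂ x₃) - ρ x₂ x₃ (ρ x₁ x₄ h)
        - ρ x₃ x₁ (ρ x₂ x₄ h) - ρ x₁ x₂ (ρ x₃ x₄ h)) := by
    simp [fundamentalDefect, D.extBr_mm, D.extBr_mh, D.brM_skew.zero_right]
  simp only [LinearMap.ext_iff, LinearMap.sub_apply, LinearMap.add_apply, Module.End.mul_apply]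
  refine forall_congr' fun h => ?_
  rw [value, Prod.mk_eq_zero, and_iff_right rfl, D.ρ_swap_apply _ x₄, D.ρ_swap_apply x₁ x₄,
    D.ρ_swap_apply x₂ x₄, D.ρ_swap_apply x₃ x₄, D.ρ_swap_apply x₂ x₁, D.β_swap x₄ h]
  simp only [map_neg]
  constructor <;> intro e <;> linear_combination (norm := module) -e

theorem fundamentalDefect_hh_mmm_eq_zero_iff (D : IsSkewExtensionDatum F brM brH μ ρ β)
    (x₁ x₂ x₃ : M) (h₁ h₂ : H) :
    Δ (0, h₁) (0, h₂) (x₁, 0) (x₂, 0) (x₃, 0) = 0 ↔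
      brH (μ x₁ x₂ x₃) h₁ h₂ = ρ x₂ x₃ (β x₁ h₁ h₂) - ρ x₁ x₃ (β x₂ h₁ h₂)
        + ρ x₁ x₂ (β x₃ h₁ h₂) - β (brM x₁ x₂ x₃) h₁ h₂ := by
  have value : Δ (0, h₁) (0, h₂) (x₁, 0) (x₂, 0) (x₃, 0) =
      (0, β (brM x₁ x₂ x₃) h₁ h₂ + brH h₁ h₂ (μ x₁ x₂ x₃) - ρ x₂ x₃ (β x₁ h₁ h₂)
        - ρ x₃ x₁ (β x₂ h₁ h₂) - ρ x₁ x₂ (β x₃ h₁ h₂)) := by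
    simp [fundamentalDefect, D.extBr_mm, D.extBr_hh, D.brM_skew.zero_right, D.brH_skew.zero_right]
  rw [value, Prod.mk_eq_zero, and_iff_right rfl, D.brH_skew.rotate (μ x₁ x₂ x₃),
    D.ρ_swap_apply x₃ x₁]
  constructor <;> intro e <;> linear_combination (norm := module) e

theorem fundamentalDefect_mm_mmh_eq_zero_iff (D : IsSkewExtensionDatum F brM brH μ ρ β)
    (mh_mmm : ∀ (u : M) (h : H) (x y z : M), Δ (u, 0) (0, h) (x, 0) (y, 0) (z, 0) = 0)
    (x y z u : M) :
    (∀ h, Δ (z, 0) (u, 0) (x, 0) (y, 0) (0, h) = 0) ↔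
      ρ x u * ρ y z + ρ y z * ρ x u + ρ x y * ρ z u + ρ z u * ρ x y
        - ρ x z * ρ y u - ρ y u * ρ x z = 0 := by
  have value (h : H) : Δ (z, 0) (u, 0) (x, 0) (y, 0) (0, h) =
      (0, ρ z u (ρ x y h) - (ρ (brM z u x) y h + β y h (μ z u x))
        - (ρ x (brM z u y) h - β x h (μ z u y)) - ρ x y (ρ z u h)) := by
    simp [fundamentalDefect, D.extBr_mm, D.extBr_mh, D.extBr_hm, D.brM_skew.zero_right]
  have ρ_brM (x₁ x₂ x₃ x₄ : M) (h : H) : ρ x₄ (brM x₁ x₂ x₃) h =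
      ρ x₃ x₁ (ρ x₄ x₂ h) - ρ x₂ x₁ (ρ x₄ x₃ h) + ρ x₂ x₃ (ρ x₄ x₁ h)
        - β x₄ (μ x₁ x₂ x₃) h :=
    LinearMap.congr_fun
      ((D.fundamentalDefect_mh_mmm_eq_zero_iff ..).1 fun h => mh_mmm x₄ h x₁ x₂ x₃) h
  simp only [LinearMap.ext_iff, LinearMap.sub_apply, LinearMap.add_apply, Module.End.mul_apply,
    LinearMap.zero_apply]
  refine forall_congr' fun h => ?_
  rw [value, Prod.mk_eq_zero, and_iff_right rfl, D.ρ_swap_apply (brM z u x) y, ρ_brM, ρ_brM,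
    D.β_swap y h, D.β_swap x h, D.ρ_swap u z, D.ρ_swap y x, D.ρ_swap u x, D.ρ_swap u y]
  simp only [map_neg, LinearMap.neg_apply]
  constructor <;> intro e <;> linear_combination (norm := module) -e

theorem fundamentalDefect_mh_mmh_eq_zero_iff (D : IsSkewExtensionDatum F brM brH μ ρ β)
    (x₁ x₂ x₃ : M) (h₁ h₂ : H) :
    Δ (x₁, 0) (0, h₁) (x₂, 0) (x₃, 0) (0, h₂) = 0 ↔
      β x₁ h₁ (ρ x₂ x₃ h₂) + β x₃ h₂ (ρ x₁ x₂ h₁)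
        = ρ x₂ x₃ (β x₁ h₁ h₂) + β x₂ h₂ (ρ x₁ x₃ h₁) := by
  have value : Δ (x₁, 0) (0, h₁) (x₂, 0) (x₃, 0) (0, h₂) =
      (0, β x₁ h₁ (ρ x₂ x₃ h₂) - β x₃ h₂ (ρ x₂ x₁ h₁) + β x₂ h₂ (ρ x₃ x₁ h₁)
        - ρ x₂ x₃ (β x₁ h₁ h₂)) := by
    simp [fundamentalDefect, D.extBr_mm, D.extBr_mh, D.extBr_hm, D.brM_skew.zero_right]
  rw [value, Prod.mk_eq_zero, and_iff_right rfl, D.ρ_swap_apply x₂ x₁, D.ρ_swap_apply x₃ x₁,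
    map_neg, map_neg]
  constructor <;> intro e <;> linear_combination (norm := module) e

theorem fundamentalDefect_mm_mhh_eq_zero (D : IsSkewExtensionDatum F brM brH μ ρ β)
    (hh_mmm : ∀ (h k : H) (x y z : M), Δ (0, h) (0, k) (x, 0) (y, 0) (z, 0) = 0)
    (mh_mmh : ∀ (x : M) (h : H) (y z : M) (k : H), Δ (x, 0) (0, h) (y, 0) (z, 0) (0, k) = 0)
    (u v x : M) (h k : H) : Δ (u, 0) (v, 0) (x, 0) (0, h) (0, k) = 0 := by
  have value : Δ (u, 0) (v, 0) (x, 0) (0, h) (0, k) =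
      (0, ρ u v (β x h k) - (β (brM u v x) h k + brH h k (μ u v x)) + β x k (ρ u v h)
        - β x h (ρ u v k)) := by
    simp [fundamentalDefect, D.extBr_mm, D.extBr_mh, D.extBr_hm, D.extBr_hh,
      D.brM_skew.zero_right]
  have brH_μ := (D.fundamentalDefect_hh_mmm_eq_zero_iff ..).1 (hh_mmm h k u v x)
  have β_ρ_vux := (D.fundamentalDefect_mh_mmh_eq_zero_iff ..).1 (mh_mmh v h x u k)
  have β_ρ_uxv := (D.fundamentalDefect_mh_mmh_eq_zero_iff ..).1 (mh_mmh u k x v h)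
  rw [D.ρ_swap_apply v u, D.ρ_swap_apply x u, D.ρ_swap_apply x u, map_neg, map_neg] at β_ρ_vux
  rw [D.ρ_swap_apply x v, D.ρ_swap_apply x v, D.β_swap u k h, map_neg, map_neg, neg_neg]
    at β_ρ_uxv
  rw [value, Prod.mk_eq_zero, and_iff_right rfl, D.brH_skew.rotate, brH_μ]
  linear_combination (norm := module) β_ρ_vux + β_ρ_uxv

theorem fundamentalDefect_mh_mhh_eq_zero_iff (D : IsSkewExtensionDatum F brM brH μ ρ β)
    (x y : M) (h₁ h₂ h : H) :
    Δ (x, 0) (0, h₁) (y, 0) (0, h₂) (0, h) = 0 ↔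
      β y h₂ (β x h₁ h) - β y h (β x h₁ h₂) - β x h₁ (β y h₂ h) = brH (ρ x y h₁) h₂ h := by
  have value : Δ (x, 0) (0, h₁) (y, 0) (0, h₂) (0, h) =
      (0, β x h₁ (β y h₂ h) - brH h₂ h (ρ y x h₁) + β y h (β x h₁ h₂)
        - β y h₂ (β x h₁ h)) := by
    simp [fundamentalDefect, D.extBr_mh, D.extBr_hm, D.extBr_hh]
  rw [value, Prod.mk_eq_zero, and_iff_right rfl, D.brH_skew.rotate, D.ρ_swap_apply y x,
    D.brH_skew.neg_left]
  constructor <;> intro e <;> linear_combination (norm := module) -e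

theorem fundamentalDefect_hh_mmh_eq_zero (D : IsSkewExtensionDatum F brM brH μ ρ β)
    (mh_mhh : ∀ (x : M) (h : H) (y : M) (k l : H), Δ (x, 0) (0, h) (y, 0) (0, k) (0, l) = 0)
    (x y : M) (hder : IsDer3 F brH (ρ x y)) (h k l : H) :
    Δ (0, h) (0, k) (x, 0) (y, 0) (0, l) = 0 := by
  have value : Δ (0, h) (0, k) (x, 0) (y, 0) (0, l) =
      (0, brH h k (ρ x y l) - β y l (β x h k) + β x l (β y h k) - ρ x y (brH h k l)) := by
    simp [fundamentalDefect, D.extBr_mm, D.extBr_mh, D.extBr_hm, D.extBr_hh,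
      D.brM_skew.zero_right, D.brH_skew.zero_right]
  have brH_ρ (x y : M) (h k l : H) :
      β y k (β x h l) - β y l (β x h k) - β x h (β y k l) = brH (ρ x y h) k l :=
    (D.fundamentalDefect_mh_mhh_eq_zero_iff ..).1 (mh_mhh x h y k l)
  have brH_ρ_swap : brH (ρ x y l) h k = -brH (ρ y x l) h k := by
    rw [D.ρ_swap_apply x y, D.brH_skew.neg_left]
  rw [← brH_ρ, ← brH_ρ] at brH_ρ_swap
  rw [value, D.brH_skew.isDer3_apply hder, D.brH_skew.rotate (ρ x y h),
    D.brH_skew.rotate (ρ x y k), ← brH_ρ x y h k l, ← brH_ρ x y k l h, Prod.mk_eq_zero,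
    and_iff_right rfl]
  simp only [D.β_swap x k h, D.β_swap x l h, D.β_swap x l k, D.β_swap y l h,
    D.β_swap y l k, map_neg] at brH_ρ_swap ⊢
  linear_combination (norm := module) -brH_ρ_swap

theorem fundamentalDefect_hh_mhh_eq_zero_iff (D : IsSkewExtensionDatum F brM brH μ ρ β)
    (x : M) (hβder : ∀ h, IsDer3 F brH (β x h)) (h₁ h₂ h₃ h₄ : H) :
    Δ (0, h₃) (0, h₄) (x, 0) (0, h₁) (0, h₂) = 0 ↔
      brH (β x h₁ h₃) h₂ h₄ + brH h₃ (β x h₁ h₂) h₄ + brH (β x h₃ h₂) h₁ h₄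
        = β x (brH h₁ h₂ h₃) h₄ := by
  have value : Δ (0, h₃) (0, h₄) (x, 0) (0, h₁) (0, h₂) =
      (0, brH h₃ h₄ (β x h₁ h₂) - brH h₁ h₂ (β x h₃ h₄) + β x h₂ (brH h₃ h₄ h₁)
        - β x h₁ (brH h₃ h₄ h₂)) := by
    simp [fundamentalDefect, D.extBr_mh, D.extBr_hm, D.extBr_hh, D.brH_skew.zero_right]
  have β_brH (h k l m : H) : β x h (brH k l m) =
      brH l m (β x h k) + brH m k (β x h l) + brH k l (β x h m) :=
    D.brH_skew.isDer3_apply (hβder h) k l m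
  rw [value, Prod.mk_eq_zero, and_iff_right rfl, D.β_swap x (brH h₁ h₂ h₃), β_brH, β_brH, β_brH,
    ← D.brH_skew.rotate (β x h₁ h₃), ← D.brH_skew.rotate (β x h₃ h₂),
    D.brH_skew.rotate h₄ h₃ (β x h₁ h₂)]
  simp only [D.brH_skew.swap_left h₂ h₄, D.brH_skew.swap_left h₃ h₄, D.brH_skew.swap_left h₁ h₄,
    D.brH_skew.swap_left h₁ h₃, D.β_swap x h₂ h₁, D.β_swap x h₃ h₂, D.β_swap x h₄ h₁,
    D.β_swap x h₄ h₂, D.β_swap x h₄ h₃, D.brH_skew.neg_right, neg_neg]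
  constructor <;> intro e <;> linear_combination (norm := module) e

theorem fundamentalDefect_mm_hhh_eq_zero (D : IsSkewExtensionDatum F brM brH μ ρ β)
    (u v : M) (hder : IsDer3 F brH (ρ u v)) (h k l : H) :
    Δ (u, 0) (v, 0) (0, h) (0, k) (0, l) = 0 := by
  have value : Δ (u, 0) (v, 0) (0, h) (0, k) (0, l) =
      (0, ρ u v (brH h k l) - brH k l (ρ u v h) - brH l h (ρ u v k) - brH h k (ρ u v l)) := by
    simp [fundamentalDefect, D.extBr_mm, D.extBr_hh, D.brM_skew.zero_right]
  rw [value, D.brH_skew.isDer3_apply hder, Prod.mk_eq_zero, and_iff_right rfl]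
  abel

theorem fundamentalDefect_mh_hhh_eq_zero (D : IsSkewExtensionDatum F brM brH μ ρ β)
    (x : M) (g : H) (hder : IsDer3 F brH (β x g)) (h k l : H) :
    Δ (x, 0) (0, g) (0, h) (0, k) (0, l) = 0 := by
  have value : Δ (x, 0) (0, g) (0, h) (0, k) (0, l) =
      (0, β x g (brH h k l) - brH k l (β x g h) - brH l h (β x g k) - brH h k (β x g l)) := by
    simp [fundamentalDefect, D.extBr_mh, D.extBr_hh]
  rw [value, D.brH_skew.isDer3_apply hder, Prod.mk_eq_zero, and_iff_right rfl]
  abel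

theorem fundamentalDefect_hh_hhh (D : IsSkewExtensionDatum F brM brH μ ρ β) (h₁ h₂ h₃ h₄ h₅ : H) :
    Δ (0, h₁) (0, h₂) (0, h₃) (0, h₄) (0, h₅) = (0, fundamentalDefect brH h₁ h₂ h₃ h₄ h₅) := by
  simp [fundamentalDefect, D.extBr_hh]

theorem isThreeLieBracket_extBr (D : IsSkewExtensionDatum F brM brH μ ρ β)
    (hH : IsThreeLieBracket F brH) (hρder : ∀ x y, IsDer3 F brH (ρ x y))
    (hβder : ∀ x h, IsDer3 F brH (β x h))
    (mm_mmm : ∀ u v x y z : M, Δ (u, 0) (v, 0) (x, 0) (y, 0) (z, 0) = 0)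
    (mm_mmh : ∀ (u v x y : M) (h : H), Δ (u, 0) (v, 0) (x, 0) (y, 0) (0, h) = 0)
    (mh_mmm : ∀ (u : M) (g : H) (x y z : M), Δ (u, 0) (0, g) (x, 0) (y, 0) (z, 0) = 0)
    (mh_mmh : ∀ (u : M) (g : H) (x y : M) (h : H), Δ (u, 0) (0, g) (x, 0) (y, 0) (0, h) = 0)
    (mh_mhh : ∀ (u : M) (g : H) (x : M) (h k : H), Δ (u, 0) (0, g) (x, 0) (0, h) (0, k) = 0)
    (hh_mmm : ∀ (f g : H) (x y z : M), Δ (0, f) (0, g) (x, 0) (y, 0) (z, 0) = 0)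
    (hh_mhh : ∀ (f g : H) (x : M) (h k : H), Δ (0, f) (0, g) (x, 0) (0, h) (0, k) = 0) :
    IsThreeLieBracket F (extBr F brM brH μ ρ β) := by
  have hA := D.isSkewTrilinear_extBr
  have mm_mhh := D.fundamentalDefect_mm_mhh_eq_zero hh_mmm mh_mmh
  have mm_hhh u v := D.fundamentalDefect_mm_hhh_eq_zero u v (hρder u v)
  have mh_hhh u g := D.fundamentalDefect_mh_hhh_eq_zero u g (hβder u g)
  have hh_mmh f g x y h := D.fundamentalDefect_hh_mmh_eq_zero mh_mhh x y (hρder x y) f g h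
  have hh_hhh f g h k l : Δ (0, f) (0, g) (0, h) (0, k) (0, l) = 0 := by
    rw [D.fundamentalDefect_hh_hhh, D.brH_skew.isThreeLieBracket_iff.1 hH, Prod.mk_zero_zero]
  have of_pure u v := (hA.isSkewTrilinear_fundamentalDefect u v).eq_zero_of_pure
  refine hA.isThreeLieBracket_iff.2 (hA.fundamentalDefect_eq_zero_of_pure_left
    (fun u v => ?_) (fun u g => ?_) (fun f g => ?_))
  · exact of_pure _ _ (mm_mmm u v) (mm_mmh u v) (mm_mhh u v) (mm_hhh u v)
  · exact of_pure _ _ (mh_mmm u g) (mh_mmh u g) (mh_mhh u g) (mh_hhh u g)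
  · exact of_pure _ _ (hh_mmm f g) (hh_mmh f g) (hh_mhh f g) (hh_hhh f g)

end IsSkewExtensionDatum

theorem stmt5_general {F M H : Type*} [Field F] [AddCommGroup M] [Module F M]
    [AddCommGroup H] [Module F H]
    (brM : M → M → M → M) (hM : IsThreeLieBracket F brM)
    (brH : H → H → H → H) (hH : IsThreeLieBracket F brH)
    (μ : M →ₗ[F] M →ₗ[F] M →ₗ[F] H)
    (hμ12 : ∀ x y z : M, μ y x z = - μ x y z)
    (hμ23 : ∀ x y z : M, μ x z y = - μ x y z)
    (ρ : M →ₗ[F] M →ₗ[F] Module.End F H)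
    (hρskew : ∀ x y : M, ρ x y = - ρ y x)
    (hρder : ∀ x y : M, IsDer3 F brH (ρ x y))
    (β : M →ₗ[F] H →ₗ[F] Module.End F H)
    (hβder : ∀ (x : M) (h : H), IsDer3 F brH (β x h))
    (hβskew : ∀ (x : M) (h1 h2 : H), β x h1 h2 = - β x h2 h1) :
    IsThreeLieBracket F (extBr F brM brH μ ρ β) ↔
      ((∀ x y z u : M,
          ρ x u * ρ y z + ρ y z * ρ x u + ρ x y * ρ z u + ρ z u * ρ x y
            - ρ x z * ρ y u - ρ y u * ρ x z = 0) ∧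
       (∀ x1 x2 x3 x4 : M,
          ρ x4 (brM x1 x2 x3)
            = ρ x3 x1 * ρ x4 x2 - ρ x2 x1 * ρ x4 x3 + ρ x2 x3 * ρ x4 x1
              - β x4 (μ x1 x2 x3)) ∧
       (∀ (x y : M) (h1 h2 h : H),
          β y h2 (β x h1 h) - β y h (β x h1 h2) - β x h1 (β y h2 h)
            = brH (ρ x y h1) h2 h) ∧
       (∀ (x : M) (h1 h2 h3 h4 : H),
          brH (β x h1 h3) h2 h4 + brH h3 (β x h1 h2) h4 + brH (β x h3 h2) h1 h4
            = β x (brH h1 h2 h3) h4) ∧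
       (∀ (x1 x2 x3 : M) (h1 h2 : H),
          brH (μ x1 x2 x3) h1 h2
            = ρ x2 x3 (β x1 h1 h2) - ρ x1 x3 (β x2 h1 h2) + ρ x1 x2 (β x3 h1 h2)
              - β (brM x1 x2 x3) h1 h2) ∧
       (∀ (x1 x2 x3 : M) (h1 h2 : H),
          β x1 h1 (ρ x2 x3 h2) + β x3 h2 (ρ x1 x2 h1)
            = ρ x2 x3 (β x1 h1 h2) + β x2 h2 (ρ x1 x3 h1)) ∧
       (∀ x1 x2 x3 x4 x5 : M,
          μ x1 x2 (brM x3 x4 x5) - μ (brM x1 x2 x3) x4 x5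
            - μ x3 (brM x1 x2 x4) x5 - μ x3 x4 (brM x1 x2 x5)
            = ρ x3 x4 (μ x1 x2 x5) - ρ x3 x5 (μ x1 x2 x4)
              - ρ x1 x2 (μ x3 x4 x5) + ρ x4 x5 (μ x1 x2 x3))) := by
  have D : IsSkewExtensionDatum F brM brH μ ρ β :=
    ⟨hM.isSkewTrilinear, hH.isSkewTrilinear, hμ12, hμ23, hρskew, hβskew⟩
  have defect_M := D.brM_skew.isThreeLieBracket_iff.1 hM
  have i_iff := D.fundamentalDefect_mm_mmh_eq_zero_iff
  have ii_iff := D.fundamentalDefect_mh_mmm_eq_zero_iff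
  have iii_iff := D.fundamentalDefect_mh_mhh_eq_zero_iff
  have iv_iff x := D.fundamentalDefect_hh_mhh_eq_zero_iff x (hβder x)
  have v_iff := D.fundamentalDefect_hh_mmm_eq_zero_iff
  have vi_iff := D.fundamentalDefect_mh_mmh_eq_zero_iff
  have vii_iff x₁ x₂ x₃ x₄ x₅ :=
    D.fundamentalDefect_mm_mmm_eq_zero_iff x₁ x₂ x₃ x₄ x₅ (defect_M ..)
  constructor
  · intro hA
    have defect := D.isSkewTrilinear_extBr.isThreeLieBracket_iff.1 hA
    exact ⟨fun _ _ _ _ => (i_iff (fun _ _ _ _ _ => defect ..) ..).1 fun _ => defect ..,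
      fun _ _ _ _ => (ii_iff ..).1 fun _ => defect .., fun _ _ _ _ _ => (iii_iff ..).1 (defect ..),
      fun _ _ _ _ _ => (iv_iff ..).1 (defect ..), fun _ _ _ _ _ => (v_iff ..).1 (defect ..),
      fun _ _ _ _ _ => (vi_iff ..).1 (defect ..), fun _ _ _ _ _ => (vii_iff ..).1 (defect ..)⟩
  · rintro ⟨i, ii, iii, iv, v, vi, vii⟩
    have mh_mmm u h x y z := (ii_iff x y z u).2 (ii ..) h
    exact D.isThreeLieBracket_extBr hH hρder hβder (fun _ _ _ _ _ => (vii_iff ..).2 (vii ..))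
      (fun _ _ _ _ => (i_iff mh_mmm ..).2 (i ..)) mh_mmm
      (fun _ _ _ _ _ => (vi_iff ..).2 (vi ..)) (fun _ _ _ _ _ => (iii_iff ..).2 (iii ..))
      (fun _ _ _ _ _ => (v_iff ..).2 (v ..)) (fun _ _ _ _ _ => (iv_iff ..).2 (iv ..))

/-- Theorem 3.5: the `(μ,ρ,β)`-extension `A = M ⊕ H` is a 3-Lie algebra iff
identities (i)–(vii) hold. -/
theorem stmt5 {F M H : Type*} [Field F] [AddCommGroup M] [Module F M]
    [AddCommGroup H] [Module F H] (hchar : (2 : F) ≠ 0)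
    (brM : M → M → M → M) (hM : IsThreeLieBracket F brM)
    (brH : H → H → H → H) (hH : IsThreeLieBracket F brH)
    (μ : M →ₗ[F] M →ₗ[F] M →ₗ[F] H)
    (hμ12 : ∀ x y z : M, μ y x z = - μ x y z)
    (hμ23 : ∀ x y z : M, μ x z y = - μ x y z)
    (ρ : M →ₗ[F] M →ₗ[F] Module.End F H)
    (hρskew : ∀ x y : M, ρ x y = - ρ y x)
    (hρder : ∀ x y : M, IsDer3 F brH (ρ x y))
    (β : M →ₗ[F] H →ₗ[F] Module.End F H)
    (hβder : ∀ (x : M) (h : H), IsDer3 F brH (β x h))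
    (hβskew : ∀ (x : M) (h1 h2 : H), β x h1 h2 = - β x h2 h1) :
    IsThreeLieBracket F (extBr F brM brH μ ρ β) ↔
      ((∀ x y z u : M,
          ρ x u * ρ y z + ρ y z * ρ x u + ρ x y * ρ z u + ρ z u * ρ x y
            - ρ x z * ρ y u - ρ y u * ρ x z = 0) ∧
       (∀ x1 x2 x3 x4 : M,
          ρ x4 (brM x1 x2 x3)
            = ρ x3 x1 * ρ x4 x2 - ρ x2 x1 * ρ x4 x3 + ρ x2 x3 * ρ x4 x1
              - β x4 (μ x1 x2 x3)) ∧
       (∀ (x y : M) (h1 h2 h : H),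
          β y h2 (β x h1 h) - β y h (β x h1 h2) - β x h1 (β y h2 h)
            = brH (ρ x y h1) h2 h) ∧
       (∀ (x : M) (h1 h2 h3 h4 : H),
          brH (β x h1 h3) h2 h4 + brH h3 (β x h1 h2) h4 + brH (β x h3 h2) h1 h4
            = β x (brH h1 h2 h3) h4) ∧
       (∀ (x1 x2 x3 : M) (h1 h2 : H),
          brH (μ x1 x2 x3) h1 h2
            = ρ x2 x3 (β x1 h1 h2) - ρ x1 x3 (β x2 h1 h2) + ρ x1 x2 (β x3 h1 h2)
              - β (brM x1 x2 x3) h1 h2) ∧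
       (∀ (x1 x2 x3 : M) (h1 h2 : H),
          β x1 h1 (ρ x2 x3 h2) + β x3 h2 (ρ x1 x2 h1)
            = ρ x2 x3 (β x1 h1 h2) + β x2 h2 (ρ x1 x3 h1)) ∧
       (∀ x1 x2 x3 x4 x5 : M,
          μ x1 x2 (brM x3 x4 x5) - μ (brM x1 x2 x3) x4 x5
            - μ x3 (brM x1 x2 x4) x5 - μ x3 x4 (brM x1 x2 x5)
            = ρ x3 x4 (μ x1 x2 x5) - ρ x3 x5 (μ x1 x2 x4)
              - ρ x1 x2 (μ x3 x4 x5) + ρ x4 x5 (μ x1 x2 x3))) := by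
  exact stmt5_general brM hM brH hH μ hμ12 hμ23 ρ hρskew hρder β hβder hβskew
end

section
/- Let A = M ⊕ H be a (μ,ρ,β)-extension of H by M which is a 3-Lie algebra. Then (H, ρ) is an M-module (i.e. ρ is a representation of M on H) if and only if β(x4, μ(x1,x2,x3)) = 0 for all x1, x2, x3, x4 ∈ M. -/
/-!
In an extension `A = M ⊕ H`, a bracket `[x, y, z]` of elements of `M` has the extra component
`μ(x, y, z)` in `H`, and bracketing that component with `u ∈ M` and `h ∈ H` produces
`-β(u, μ(x, y, z)) h`. Hence the fundamental identity of `A`, evaluated on four elements of `M` and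
one of `H`, gives both axioms of a representation for `ρ` up to terms `β(u, μ(x, y, z))`. In the
axiom for `ρ([x, y, z], u)` there is exactly one such term, so that axiom holds if and only if the
term vanishes.
-/

namespace IsThreeLieBracket

section Bracket

variable {F A : Type*} [Field F] [AddCommGroup A] [Module F A] {br : A → A → A → A}

theorem add_left (hbr : IsThreeLieBracket F br) (x x' y z : A) :
    br (x + x') y z = br x y z + br x' y z :=
  hbr.1 x x' y z

theorem smul_left (hbr : IsThreeLieBracket F br) (c : F) (x y z : A) :
    br (c • x) y z = c • br x y z :=
  hbr.2.1 c x y z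

theorem swap_left (hbr : IsThreeLieBracket F br) (x y z : A) : br y x z = -br x y z :=
  hbr.2.2.1 x y z

theorem swap_right (hbr : IsThreeLieBracket F br) (x y z : A) : br x z y = -br x y z :=
  hbr.2.2.2.1 x y z

theorem fundamental_identity (hbr : IsThreeLieBracket F br) (x y z u v : A) :
    br (br x y z) u v = br (br x u v) y z + br x (br y u v) z + br x y (br z u v) :=
  hbr.2.2.2.2 x y z u v

theorem rotate (hbr : IsThreeLieBracket F br) (x y z : A) : br y z x = br x y z := by
  rw [hbr.swap_right, hbr.swap_left, neg_neg]

theorem leibniz (hbr : IsThreeLieBracket F br) (u v x y z : A) :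
    br u v (br x y z) = br (br u v x) y z + br x (br u v y) z + br x y (br u v z) := by
  simpa only [hbr.rotate _ u v] using hbr.fundamental_identity x y z u v

theorem zero_left (hbr : IsThreeLieBracket F br) (y z : A) : br 0 y z = 0 := by
  simpa using hbr.add_left 0 0 y z

theorem zero_middle (hbr : IsThreeLieBracket F br) (x z : A) : br x 0 z = 0 := by
  rw [hbr.swap_left, hbr.zero_left, neg_zero]

theorem zero_right (hbr : IsThreeLieBracket F br) (x y : A) : br x y 0 = 0 := by
  rw [hbr.swap_right, hbr.zero_middle, neg_zero]

end Bracket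

section Extension

variable {F M H : Type*} [Field F] [AddCommGroup M] [Module F M] [AddCommGroup H] [Module F H]
  {brM : M → M → M → M} {brH : H → H → H → H} {μ : M →ₗ[F] M →ₗ[F] M →ₗ[F] H}
  {ρ : M →ₗ[F] M →ₗ[F] Module.End F H} {β : M →ₗ[F] H →ₗ[F] Module.End F H}

theorem quotient_of_extBr (hA : IsThreeLieBracket F (extBr F brM brH μ ρ β)) :
    IsThreeLieBracket F brM :=
  ⟨fun x x' y z => congrArg Prod.fst (hA.add_left (x, 0) (x', 0) (y, 0) (z, 0)),
    fun c x y z => congrArg Prod.fst (hA.smul_left c (x, 0) (y, 0) (z, 0)),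
    fun x y z => congrArg Prod.fst (hA.swap_left (x, 0) (y, 0) (z, 0)),
    fun x y z => congrArg Prod.fst (hA.swap_right (x, 0) (y, 0) (z, 0)),
    fun x y z u v =>
      congrArg Prod.fst (hA.fundamental_identity (x, 0) (y, 0) (z, 0) (u, 0) (v, 0))⟩

theorem extBr_inr_inr_inr (hA : IsThreeLieBracket F (extBr F brM brH μ ρ β)) (h k l : H) :
    extBr F brM brH μ ρ β (0, h) (0, k) (0, l) = (0, brH h k l) := by
  simp [extBr, hA.quotient_of_extBr.zero_left]

theorem ideal_of_extBr (hA : IsThreeLieBracket F (extBr F brM brH μ ρ β)) :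
    IsThreeLieBracket F brH := by
  refine ⟨fun h h' k l => ?_, fun c h k l => ?_, fun h k l => ?_, fun h k l => ?_,
    fun h k l p q => ?_⟩
  · simpa [hA.extBr_inr_inr_inr] using hA.add_left (0, h) (0, h') (0, k) (0, l)
  · simpa [hA.extBr_inr_inr_inr] using hA.smul_left c (0, h) (0, k) (0, l)
  · simpa [hA.extBr_inr_inr_inr] using hA.swap_left (0, h) (0, k) (0, l)
  · simpa [hA.extBr_inr_inr_inr] using hA.swap_right (0, h) (0, k) (0, l)
  · simpa [hA.extBr_inr_inr_inr] using
      hA.fundamental_identity (0, h) (0, k) (0, l) (0, p) (0, q)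

theorem extBr_inl_inl_inl (hA : IsThreeLieBracket F (extBr F brM brH μ ρ β)) (x y z : M) :
    extBr F brM brH μ ρ β (x, 0) (y, 0) (z, 0) = (brM x y z, μ x y z) := by
  simp [extBr, hA.ideal_of_extBr.zero_left]

theorem extBr_inl_inl_inr (hA : IsThreeLieBracket F (extBr F brM brH μ ρ β)) (x y : M) (h : H) :
    extBr F brM brH μ ρ β (x, 0) (y, 0) (0, h) = (0, ρ x y h) := by
  simp [extBr, hA.quotient_of_extBr.zero_right, hA.ideal_of_extBr.zero_left]

theorem extBr_inl_inr_inl (hA : IsThreeLieBracket F (extBr F brM brH μ ρ β)) (x z : M) (h : H) :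
    extBr F brM brH μ ρ β (x, 0) (0, h) (z, 0) = (0, ρ z x h) := by
  rw [hA.rotate, hA.extBr_inl_inl_inr]

theorem extBr_inr_inl_inl (hA : IsThreeLieBracket F (extBr F brM brH μ ρ β)) (y z : M) (h : H) :
    extBr F brM brH μ ρ β (0, h) (y, 0) (z, 0) = (0, ρ y z h) := by
  rw [← hA.rotate, hA.extBr_inl_inl_inr]

theorem extBr_inl_inr_inr (hA : IsThreeLieBracket F (extBr F brM brH μ ρ β)) (x : M) (h k : H) :
    extBr F brM brH μ ρ β (x, 0) (0, h) (0, k) = (0, β x h k) := by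
  simp [extBr, hA.quotient_of_extBr.zero_right, hA.ideal_of_extBr.zero_left]

theorem extBr_mk_inl_inr (hA : IsThreeLieBracket F (extBr F brM brH μ ρ β))
    (w u : M) (k h : H) :
    extBr F brM brH μ ρ β (w, k) (u, 0) (0, h) = (0, ρ w u h - β u k h) := by
  have hsplit : ((w, k) : M × H) = (w, 0) + (0, k) := by simp
  rw [hsplit, hA.add_left, hA.extBr_inl_inl_inr, hA.swap_left (u, 0), hA.extBr_inl_inr_inr]
  simp [sub_eq_add_neg]

theorem action_skew (hA : IsThreeLieBracket F (extBr F brM brH μ ρ β)) (x y : M) :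
    ρ x y = -ρ y x := by
  ext h
  simpa [hA.extBr_inl_inl_inr] using hA.swap_left (y, 0) (x, 0) (0, h)

theorem action_bracket_sub (hA : IsThreeLieBracket F (extBr F brM brH μ ρ β)) (x y z u : M) :
    ρ (brM x y z) u - β u (μ x y z) = ρ x y * ρ z u + ρ y z * ρ x u + ρ z x * ρ y u := by
  ext h
  have hfi := hA.fundamental_identity (x, 0) (y, 0) (z, 0) (u, 0) (0, h)
  simp only [hA.extBr_inl_inl_inl, hA.extBr_mk_inl_inr, hA.extBr_inl_inr_inl,
    hA.extBr_inr_inl_inl, map_zero, LinearMap.zero_apply, sub_zero] at hfi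
  calc ρ (brM x y z) u h - β u (μ x y z) h
      = ρ y z (ρ x u h) + ρ z x (ρ y u h) + ρ x y (ρ z u h) := congrArg Prod.snd hfi
    _ = ρ x y (ρ z u h) + ρ y z (ρ x u h) + ρ z x (ρ y u h) := by abel

theorem action_commutator (hA : IsThreeLieBracket F (extBr F brM brH μ ρ β)) (x y z u : M) :
    ρ x y * ρ z u - ρ z u * ρ x y =
      (ρ (brM x y z) u - β u (μ x y z)) - (ρ (brM x y u) z - β z (μ x y u)) := by
  ext h
  have hleibniz := hA.leibniz (x, 0) (y, 0) (z, 0) (u, 0) (0, h)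
  simp only [hA.extBr_inl_inl_inl, hA.extBr_inl_inl_inr, hA.extBr_mk_inl_inr,
    hA.swap_left (brM x y u, μ x y u) (z, 0)] at hleibniz
  have hsnd : ρ x y (ρ z u h) = (ρ (brM x y z) u h - β u (μ x y z) h) +
      -(ρ (brM x y u) z h - β z (μ x y u) h) + ρ z u (ρ x y h) := congrArg Prod.snd hleibniz
  simp only [LinearMap.sub_apply, Module.End.mul_apply, hsnd]
  abel

end Extension

end IsThreeLieBracket

theorem stmt7_general {F M H : Type*} [Field F] [AddCommGroup M] [Module F M]
    [AddCommGroup H] [Module F H] {brM : M → M → M → M} {brH : H → H → H → H}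
    {μ : M →ₗ[F] M →ₗ[F] M →ₗ[F] H} {ρ : M →ₗ[F] M →ₗ[F] Module.End F H}
    {β : M →ₗ[F] H →ₗ[F] Module.End F H}
    (hA : IsThreeLieBracket F (extBr F brM brH μ ρ β)) :
    IsRep3 F brM ρ ↔ ∀ x1 x2 x3 x4 : M, β x4 (μ x1 x2 x3) = 0 := by
  constructor
  · rintro ⟨-, -, hbracket⟩ x1 x2 x3 x4
    rw [← sub_eq_self, hA.action_bracket_sub, hbracket]
  · intro hβμ
    refine ⟨hA.action_skew, fun x1 x2 x3 x4 => ?_, fun x1 x2 x3 x4 => ?_⟩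
    · simpa only [hβμ, sub_zero] using hA.action_commutator x1 x2 x3 x4
    · simpa only [hβμ, sub_zero] using hA.action_bracket_sub x1 x2 x3 x4

/-- Theorem 3.7: for a `(μ,ρ,β)`-extension 3-Lie algebra `A = M ⊕ H`,
`(H, ρ)` is an `M`-module iff `β(M, μ(M,M,M)) = 0`. -/
theorem stmt7 {F M H : Type*} [Field F] [AddCommGroup M] [Module F M]
    [AddCommGroup H] [Module F H] (hchar : (2 : F) ≠ 0)
    (brM : M → M → M → M) (hM : IsThreeLieBracket F brM)
    (brH : H → H → H → H) (hH : IsThreeLieBracket F brH)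
    (μ : M →ₗ[F] M →ₗ[F] M →ₗ[F] H)
    (hμ12 : ∀ x y z : M, μ y x z = - μ x y z)
    (hμ23 : ∀ x y z : M, μ x z y = - μ x y z)
    (ρ : M →ₗ[F] M →ₗ[F] Module.End F H)
    (hρskew : ∀ x y : M, ρ x y = - ρ y x)
    (hρder : ∀ x y : M, IsDer3 F brH (ρ x y))
    (β : M →ₗ[F] H →ₗ[F] Module.End F H)
    (hβder : ∀ (x : M) (h : H), IsDer3 F brH (β x h))
    (hβskew : ∀ (x : M) (h1 h2 : H), β x h1 h2 = - β x h2 h1)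
    (hA : IsThreeLieBracket F (extBr F brM brH μ ρ β)) :
    IsRep3 F brM ρ ↔ ∀ x1 x2 x3 x4 : M, β x4 (μ x1 x2 x3) = 0 :=
  stmt7_general hA
end

section
/- Let A = M ⊕ H be a (μ,ρ,β)-extension of H by M which is a 3-Lie algebra, and let (σ,τ) ∈ Der(M) × Der(H). Then the pair (σ,τ) is extendable if and only if there exists a linear map γ : M → H such that for all x, x1, x2, x3 ∈ M and h ∈ H: (i) τ(μ(x1,x2,x3)) + γ([x1,x2,x3]_M) = μ(σx1,x2,x3) + μ(x1,σx2,x3) + μ(x1,x2,σx3) + ρ(x1,x2)γ(x3) + ρ(x3,x1)γ(x2) + ρ(x2,x3)γ(x1); (ii) τ∘ρ(x1,x2) − ρ(x1,x2)∘τ = ρ(σx1,x2) + ρ(x1,σx2) − β(x2,γ(x1)) + β(x1,γ(x2)) as linear maps H → H; (iii) τ∘β(x,h) − β(x,h)∘τ = β(σx,h) + β(x,τh) + ad(γ(x),h) as linear maps H → H, where ad(a,b) denotes the map c ↦ [a,b,c]_H. In this case an extension δ ∈ Der(A) is given by δ(x + h) = σx + γ(x) + τh for x ∈ M, h ∈ H.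 -/
/-!
A linear map `δ` of `M ⊕ H` restricts to `τ` on `H` and induces `σ` on `M` exactly when it is block
triangular, `δ (x, h) = (σ x, γ x + τ h)`. The `M`-component of the Leibniz rule for such a `δ` is
the Leibniz rule for `σ`. By additivity its `H`-component is determined by the triples whose entries
lie in `M` or in `H`; with no, one, two or three entries in `H` it reads (i), (ii), (iii) and the
Leibniz rule for `τ`, respectively.
-/

section Bracket

/-- A skew-symmetric ternary bracket that is additive in each argument; skew-symmetry lets us ask
for additivity in the first argument only. This is the notion of a 3-Lie bracket without
homogeneity and the fundamental identity. -/
structure IsSkewTriadditive {A : Type*} [AddCommGroup A] (br : A → A → A → A) : Prop where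
  add_left : ∀ x x' y z, br (x + x') y z = br x y z + br x' y z
  swap_left : ∀ x y z, br y x z = -br x y z
  swap_right : ∀ x y z, br x z y = -br x y z

theorem IsThreeLieBracket.isSkewTriadditive {F A : Type*} [Field F] [AddCommGroup A] [Module F A]
    {br : A → A → A → A} (hbr : IsThreeLieBracket F br) : IsSkewTriadditive br :=
  have ⟨add_left, _, swap_left, swap_right, _⟩ := hbr
  ⟨add_left, swap_left, swap_right⟩

namespace IsSkewTriadditive

variable {A : Type*} [AddCommGroup A] {br : A → A → A → A}

theorem rotate (hbr : IsSkewTriadditive br) (x y z : A) : br x y z = br y z x := by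
  rw [hbr.swap_right y x z, hbr.swap_left x y z, neg_neg]

theorem add_middle (hbr : IsSkewTriadditive br) (x y y' z : A) :
    br x (y + y') z = br x y z + br x y' z := by
  rw [hbr.rotate, hbr.add_left, ← hbr.rotate x, ← hbr.rotate x]

theorem add_right (hbr : IsSkewTriadditive br) (x y z z' : A) :
    br x y (z + z') = br x y z + br x y z' := by
  rw [← hbr.rotate, hbr.add_left, hbr.rotate z, hbr.rotate z']

theorem zero_left (hbr : IsSkewTriadditive br) (y z : A) : br 0 y z = 0 := by
  simpa using hbr.add_left 0 0 y z

theorem zero_middle (hbr : IsSkewTriadditive br) (x z : A) : br x 0 z = 0 := by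
  rw [hbr.rotate, hbr.zero_left]

theorem zero_right (hbr : IsSkewTriadditive br) (x y : A) : br x y 0 = 0 := by
  rw [← hbr.rotate, hbr.zero_left]

end IsSkewTriadditive

end Bracket

section Triangular

variable {R M M' H H' : Type*} [Semiring R] [AddCommMonoid M] [Module R M]
  [AddCommMonoid M'] [Module R M'] [AddCommMonoid H] [Module R H] [AddCommMonoid H'] [Module R H']

/-- The block triangular linear map `(x, h) ↦ (σ x, γ x + τ h)`, the general form of a linear map
that restricts to `τ` on the second factors and induces `σ` on the first ones. -/
def triangular (σ : M →ₗ[R] M') (γ : M →ₗ[R] H') (τ : H →ₗ[R] H') : M × H →ₗ[R] M' × H' :=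
  (σ ∘ₗ LinearMap.fst R M H).prod (γ.coprod τ)

@[simp]
theorem triangular_apply (σ : M →ₗ[R] M') (γ : M →ₗ[R] H') (τ : H →ₗ[R] H') (x : M) (h : H) :
    triangular σ γ τ (x, h) = (σ x, γ x + τ h) :=
  rfl

theorem exists_eq_triangular_iff {σ : M →ₗ[R] M'} {τ : H →ₗ[R] H'} {δ : M × H →ₗ[R] M' × H'} :
    (∃ γ, δ = triangular σ γ τ) ↔ (∀ h, δ (0, h) = (0, τ h)) ∧ ∀ a, (δ a).1 = σ a.1 := by
  constructor
  · rintro ⟨γ, rfl⟩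
    exact ⟨fun h => by simp, fun a => rfl⟩
  · rintro ⟨hτ, hσ⟩
    refine ⟨LinearMap.snd R M' H' ∘ₗ δ ∘ₗ LinearMap.inl R M H, LinearMap.prod_ext ?_ ?_⟩
    · ext x
      · simp [hσ]
      · simp
    · ext h <;> simp [hτ]

end Triangular

section Extension

variable {F M H : Type*} [Field F] [AddCommGroup M] [Module F M] [AddCommGroup H] [Module F H]

/-- `δ` is a derivation of the bracket `br` on `M ⊕ H` that extends the pair `(σ, τ)`: it satisfies
`δ ∘ i = i ∘ τ` and `p ∘ δ = σ ∘ p` for the inclusion `i` of `H` and the projection `p` to `M`. -/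
def IsDerExtension (br : M × H → M × H → M × H → M × H) (σ : Module.End F M) (τ : Module.End F H)
    (δ : Module.End F (M × H)) : Prop :=
  IsDer3 F br δ ∧ (∀ h, δ (0, h) = (0, τ h)) ∧ ∀ a, (δ a).1 = σ a.1

/-- Conditions (i), (ii), (iii) on the off-diagonal block `γ` of a derivation of the
`(μ, ρ, β)`-extension with diagonal blocks `σ` and `τ`. -/
def IsConnectingMap (brM : M → M → M → M) (brH : H → H → H → H)
    (μ : M →ₗ[F] M →ₗ[F] M →ₗ[F] H) (ρ : M →ₗ[F] M →ₗ[F] Module.End F H)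
    (β : M →ₗ[F] H →ₗ[F] Module.End F H) (σ : Module.End F M) (τ : Module.End F H)
    (γ : M →ₗ[F] H) : Prop :=
  (∀ x1 x2 x3 : M,
    τ (μ x1 x2 x3) + γ (brM x1 x2 x3)
      = μ (σ x1) x2 x3 + μ x1 (σ x2) x3 + μ x1 x2 (σ x3)
        + ρ x1 x2 (γ x3) + ρ x3 x1 (γ x2) + ρ x2 x3 (γ x1)) ∧
  (∀ x1 x2 : M,
    τ * ρ x1 x2 - ρ x1 x2 * τ
      = ρ (σ x1) x2 + ρ x1 (σ x2) - β x2 (γ x1) + β x1 (γ x2)) ∧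
  (∀ (x : M) (h h' : H),
    τ (β x h h') - β x h (τ h')
      = β (σ x) h h' + β x (τ h) h' + brH (γ x) h h')

variable {brM : M → M → M → M} {brH : H → H → H → H}
  {μ : M →ₗ[F] M →ₗ[F] M →ₗ[F] H} {ρ : M →ₗ[F] M →ₗ[F] Module.End F H}
  {β : M →ₗ[F] H →ₗ[F] Module.End F H}
  {σ : Module.End F M} {τ : Module.End F H} {γ : M →ₗ[F] H}

namespace IsConnectingMap

theorem map_mu (hγ : IsConnectingMap brM brH μ ρ β σ τ γ) (x y z : M) :
    τ (μ x y z) = μ (σ x) y z + μ x (σ y) z + μ x y (σ z)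
      + ρ x y (γ z) + ρ z x (γ y) + ρ y z (γ x) - γ (brM x y z) :=
  eq_sub_of_add_eq (hγ.1 x y z)

theorem map_rho (hγ : IsConnectingMap brM brH μ ρ β σ τ γ) (x y : M) (h : H) :
    τ (ρ x y h) = ρ (σ x) y h + ρ x (σ y) h - β y (γ x) h + β x (γ y) h + ρ x y (τ h) :=
  eq_add_of_sub_eq (LinearMap.congr_fun (hγ.2.1 x y) h)

theorem map_beta (hγ : IsConnectingMap brM brH μ ρ β σ τ γ) (x : M) (h h' : H) :
    τ (β x h h') = β (σ x) h h' + β x (τ h) h' + brH (γ x) h h' + β x h (τ h') :=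
  eq_add_of_sub_eq (hγ.2.2 x h h')

theorem isDer3_triangular (hγ : IsConnectingMap brM brH μ ρ β σ τ γ)
    (hH : IsSkewTriadditive brH) (hβ : ∀ x h h', β x h h' = -β x h' h)
    (hσ : IsDer3 F brM σ) (hτ : IsDer3 F brH τ) :
    IsDer3 F (extBr F brM brH μ ρ β) (triangular σ γ τ) := by
  rintro ⟨x, a⟩ ⟨y, b⟩ ⟨z, c⟩
  refine Prod.ext (hσ x y z) ?_
  simp only [extBr, triangular_apply, Prod.snd_add, map_add, LinearMap.add_apply, hγ.map_mu,
    hγ.map_rho, hγ.map_beta, hτ a b c, hH.add_left, hH.add_middle, hH.add_right]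
  -- `extBr` lists its arguments cyclically, whereas (ii) and (iii) put those from `M` first.
  rw [hH.rotate a (γ y) c, hH.rotate a b (γ z), hH.rotate b (γ z) a,
    hβ x b (γ z), hβ y c (γ x), hβ z a (γ y)]
  abel

end IsConnectingMap

section Leibniz

variable (hδ : IsDer3 F (extBr F brM brH μ ρ β) (triangular σ γ τ))
include hδ

theorem isDer3_fst_of_triangular : IsDer3 F brM σ := fun x y z =>
  congrArg Prod.fst (hδ (x, 0) (y, 0) (z, 0))

theorem isDer3_snd_of_triangular (hM : IsSkewTriadditive brM) : IsDer3 F brH τ := fun a b c => by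
  simpa [extBr, hM.zero_left] using congrArg Prod.snd (hδ (0, a) (0, b) (0, c))

theorem leibniz_mu_of_triangular (hH : IsSkewTriadditive brH) (x y z : M) :
    τ (μ x y z) + γ (brM x y z)
      = μ (σ x) y z + μ x (σ y) z + μ x y (σ z)
        + ρ x y (γ z) + ρ z x (γ y) + ρ y z (γ x) := by
  have leibniz := congrArg Prod.snd (hδ (x, 0) (y, 0) (z, 0))
  simp only [extBr, triangular_apply, Prod.snd_add, map_zero, LinearMap.zero_apply, hH.zero_left,
    hH.zero_middle, add_zero] at leibniz
  rw [add_comm, leibniz]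
  abel

theorem leibniz_rho_of_triangular (hM : IsSkewTriadditive brM) (hH : IsSkewTriadditive brH)
    (hβ : ∀ x h h', β x h h' = -β x h' h) (x y : M) :
    τ * ρ x y - ρ x y * τ = ρ (σ x) y + ρ x (σ y) - β y (γ x) + β x (γ y) := by
  ext h
  have leibniz := congrArg Prod.snd (hδ (x, 0) (y, 0) (0, h))
  simp only [extBr, triangular_apply, Prod.snd_add, map_zero, LinearMap.zero_apply, hM.zero_right,
    hH.zero_left, hH.zero_middle, add_zero, zero_add] at leibniz
  simp only [LinearMap.sub_apply, LinearMap.add_apply, Module.End.mul_apply]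
  rw [leibniz, hβ y h]
  abel

theorem leibniz_beta_of_triangular (hM : IsSkewTriadditive brM) (hH : IsSkewTriadditive brH)
    (x : M) (h h' : H) :
    τ (β x h h') - β x h (τ h') = β (σ x) h h' + β x (τ h) h' + brH (γ x) h h' := by
  have leibniz := congrArg Prod.snd (hδ (x, 0) (0, h) (0, h'))
  simp only [extBr, triangular_apply, Prod.snd_add, map_zero, LinearMap.zero_apply, hM.zero_right,
    hH.zero_left, add_zero, zero_add] at leibniz
  rw [leibniz]
  abel

end Leibniz

theorem isDer3_triangular_iff (hM : IsSkewTriadditive brM) (hH : IsSkewTriadditive brH)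
    (hβ : ∀ x h h', β x h h' = -β x h' h) :
    IsDer3 F (extBr F brM brH μ ρ β) (triangular σ γ τ) ↔
      IsDer3 F brM σ ∧ IsDer3 F brH τ ∧ IsConnectingMap brM brH μ ρ β σ τ γ :=
  ⟨fun hδ => ⟨isDer3_fst_of_triangular hδ, isDer3_snd_of_triangular hδ hM,
      leibniz_mu_of_triangular hδ hH, leibniz_rho_of_triangular hδ hM hH hβ,
      leibniz_beta_of_triangular hδ hM hH⟩,
    fun ⟨hσ, hτ, hγ⟩ => hγ.isDer3_triangular hH hβ hσ hτ⟩

theorem isDerExtension_iff_exists_isConnectingMap (hM : IsSkewTriadditive brM)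
    (hH : IsSkewTriadditive brH) (hβ : ∀ x h h', β x h h' = -β x h' h)
    (hσ : IsDer3 F brM σ) (hτ : IsDer3 F brH τ) {δ : Module.End F (M × H)} :
    IsDerExtension (extBr F brM brH μ ρ β) σ τ δ ↔
      ∃ γ, δ = triangular σ γ τ ∧ IsConnectingMap brM brH μ ρ β σ τ γ := by
  rw [IsDerExtension, ← exists_eq_triangular_iff]
  constructor
  · rintro ⟨hδ, γ, rfl⟩
    exact ⟨γ, rfl, ((isDer3_triangular_iff hM hH hβ).1 hδ).2.2⟩
  · rintro ⟨γ, rfl, hγ⟩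
    exact ⟨(isDer3_triangular_iff hM hH hβ).2 ⟨hσ, hτ, hγ⟩, γ, rfl⟩

theorem stmt12_general (hM : IsSkewTriadditive brM) (hH : IsSkewTriadditive brH)
    (hβ : ∀ x h h', β x h h' = -β x h' h) (hσ : IsDer3 F brM σ) (hτ : IsDer3 F brH τ) :
    ((∃ δ, IsDerExtension (extBr F brM brH μ ρ β) σ τ δ) ↔
      ∃ γ, IsConnectingMap brM brH μ ρ β σ τ γ) ∧
    ∀ γ, IsConnectingMap brM brH μ ρ β σ τ γ →
      ∀ δ : Module.End F (M × H), (∀ x h, δ (x, h) = (σ x, γ x + τ h)) →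
        IsDerExtension (extBr F brM brH μ ρ β) σ τ δ := by
  simp only [isDerExtension_iff_exists_isConnectingMap hM hH hβ hσ hτ]
  refine ⟨⟨?_, ?_⟩, ?_⟩
  · rintro ⟨_, γ, _, hγ⟩
    exact ⟨γ, hγ⟩
  · rintro ⟨γ, hγ⟩
    exact ⟨triangular σ γ τ, γ, rfl, hγ⟩
  · intro γ hγ δ hδ
    exact ⟨γ, LinearMap.ext fun a => hδ a.1 a.2, hγ⟩

end Extension

/-- Theorem 4.3: for a `(μ,ρ,β)`-extension 3-Lie algebra `A = M ⊕ H` and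
`(σ,τ) ∈ Der(M) × Der(H)`, the pair `(σ,τ)` is extendable iff there is a linear
map `γ : M → H` satisfying (i), (ii), (iii); in this case the extension is
`δ(x + h) = σx + γ(x) + τh`. -/
theorem stmt12 {F M H : Type*} [Field F] [AddCommGroup M] [Module F M]
    [AddCommGroup H] [Module F H] (hchar : (2 : F) ≠ 0)
    (brM : M → M → M → M) (hM : IsThreeLieBracket F brM)
    (brH : H → H → H → H) (hH : IsThreeLieBracket F brH)
    (μ : M →ₗ[F] M →ₗ[F] M →ₗ[F] H)
    (hμ12 : ∀ x y z : M, μ y x z = - μ x y z)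
    (hμ23 : ∀ x y z : M, μ x z y = - μ x y z)
    (ρ : M →ₗ[F] M →ₗ[F] Module.End F H)
    (hρskew : ∀ x y : M, ρ x y = - ρ y x)
    (hρder : ∀ x y : M, IsDer3 F brH (ρ x y))
    (β : M →ₗ[F] H →ₗ[F] Module.End F H)
    (hβder : ∀ (x : M) (h : H), IsDer3 F brH (β x h))
    (hβskew : ∀ (x : M) (h1 h2 : H), β x h1 h2 = - β x h2 h1)
    (hA : IsThreeLieBracket F (extBr F brM brH μ ρ β))
    (σ : Module.End F M) (hσ : IsDer3 F brM σ)
    (τ : Module.End F H) (hτ : IsDer3 F brH τ) :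
    ((∃ δ : Module.End F (M × H),
        IsDer3 F (extBr F brM brH μ ρ β) δ ∧
        (∀ h : H, δ (0, h) = (0, τ h)) ∧
        (∀ a : M × H, (δ a).1 = σ a.1)) ↔
      (∃ γ : M →ₗ[F] H,
        (∀ x1 x2 x3 : M,
          τ (μ x1 x2 x3) + γ (brM x1 x2 x3)
            = μ (σ x1) x2 x3 + μ x1 (σ x2) x3 + μ x1 x2 (σ x3)
              + ρ x1 x2 (γ x3) + ρ x3 x1 (γ x2) + ρ x2 x3 (γ x1)) ∧
        (∀ x1 x2 : M,
          τ * ρ x1 x2 - ρ x1 x2 * τ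
            = ρ (σ x1) x2 + ρ x1 (σ x2) - β x2 (γ x1) + β x1 (γ x2)) ∧
        (∀ (x : M) (h h' : H),
          τ (β x h h') - β x h (τ h')
            = β (σ x) h h' + β x (τ h) h' + brH (γ x) h h'))) ∧
    (∀ γ : M →ₗ[F] H,
      (∀ x1 x2 x3 : M,
          τ (μ x1 x2 x3) + γ (brM x1 x2 x3)
            = μ (σ x1) x2 x3 + μ x1 (σ x2) x3 + μ x1 x2 (σ x3)
              + ρ x1 x2 (γ x3) + ρ x3 x1 (γ x2) + ρ x2 x3 (γ x1)) →
      (∀ x1 x2 : M,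
          τ * ρ x1 x2 - ρ x1 x2 * τ
            = ρ (σ x1) x2 + ρ x1 (σ x2) - β x2 (γ x1) + β x1 (γ x2)) →
      (∀ (x : M) (h h' : H),
          τ (β x h h') - β x h (τ h')
            = β (σ x) h h' + β x (τ h) h' + brH (γ x) h h') →
      ∀ δ : Module.End F (M × H),
        (∀ (x : M) (h : H), δ (x, h) = (σ x, γ x + τ h)) →
        (IsDer3 F (extBr F brM brH μ ρ β) δ ∧
         (∀ h : H, δ (0, h) = (0, τ h)) ∧
         (∀ a : M × H, (δ a).1 = σ a.1))) := by
  have general := stmt12_general (μ := μ) (ρ := ρ) hM.isSkewTriadditive hH.isSkewTriadditive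
    hβskew hσ hτ
  exact ⟨general.1, fun γ h₁ h₂ h₃ => general.2 γ ⟨h₁, h₂, h₃⟩⟩
end

section
/- Let A = M ⊕ H be a (μ,ρ,β)-extension of H by M which is a 3-Lie algebra, and let (σ,τ) ∈ Der(M) × Der(H). Set f_σ : M → M³, f_σ(x) = (σx, x, x), and f_τ : H → H³, f_τ(h) = (τh, h, h). Then the pair (σ,τ) can be extended to a derivation of A (i.e. there exists δ ∈ Der(A) with δ∘i = i∘τ and p∘δ = σ∘p) if and only if there exists a 3-Lie algebra homomorphism g : A → A³ with g∘i = (i×i×i)∘f_τ and (p×p×p)∘g = f_σ∘p. -/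
/-- The coordinatewise inclusion `i × i × i : H³ → A³` for `A = M ⊕ H`. -/
def inr3 (F : Type*) [Field F] (M H : Type*) [AddCommGroup M] [Module F M]
    [AddCommGroup H] [Module F H] :
    (H × H × H) →ₗ[F] ((M × H) × (M × H) × (M × H)) :=
  (LinearMap.inr F M H).prodMap ((LinearMap.inr F M H).prodMap (LinearMap.inr F M H))

/-- The coordinatewise projection `p × p × p : A³ → M³` for `A = M ⊕ H`. -/
def fst3 (F : Type*) [Field F] (M H : Type*) [AddCommGroup M] [Module F M]
    [AddCommGroup H] [Module F H] :
    ((M × H) × (M × H) × (M × H)) →ₗ[F] (M × M × M) :=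
  (LinearMap.fst F M H).prodMap ((LinearMap.fst F M H).prodMap (LinearMap.fst F M H))

/-!
Writing `g = (d, φ, ψ)`, the homomorphism condition `A → A³` says that `φ` and `ψ` are endomorphisms
of `A` and that `d` is a derivation along `φ`. A derivation `δ` thus yields `g = (δ, id, id)`.
Conversely, `φ` is the identity on `H` and induces the identity on `M`, so it is unipotent:
`(φ - 1)² = 0`. Hence `φ` is an automorphism, and `φ⁻¹ ∘ d` is a derivation which lies over `σ` and
restricts to `τ`, because `φ⁻¹` too acts trivially on `H` and on `M`.
-/

/-- A homomorphism of ternary brackets; between 3-Lie algebras, for a linear `f`, this is the notion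
of a 3-Lie algebra homomorphism. Linearity is left to the type of `f`. -/
def IsHom3 {A B : Type*} (brA : A → A → A → A) (brB : B → B → B → B) (f : A → B) : Prop :=
  ∀ x y z : A, f (brA x y z) = brB (f x) (f y) (f z)

/-- A derivation along `φ`: the Leibniz rule in which the arguments left alone by `d` are moved by
`φ`. For `φ = id` these are the ordinary derivations, and for general `φ` they describe the first
component of a homomorphism into `A³`. -/
def IsDer3Along {A : Type*} [Add A] (br : A → A → A → A) (φ d : A → A) : Prop :=
  ∀ x y z : A, d (br x y z) = br (d x) (φ y) (φ z) + br (φ x) (d y) (φ z) + br (φ x) (φ y) (d z)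

theorem IsThreeLieBracket.rotate_s18 {F A : Type*} [Field F] [AddCommGroup A] [Module F A]
    {br : A → A → A → A} (hbr : IsThreeLieBracket F br) (x y z : A) : br y z x = br x y z := by
  obtain ⟨-, -, swap_left, swap_right, -⟩ := hbr
  rw [swap_right y x z, swap_left x y z, neg_neg]

theorem isHom3_tripleBr_iff {A : Type*} [AddCommGroup A] {br : A → A → A → A}
    (rotate_s18 : ∀ x y z, br y z x = br x y z) {d φ ψ : A → A} :
    IsHom3 br (tripleBr br) (fun x => (d x, φ x, ψ x)) ↔
      IsDer3Along br φ d ∧ IsHom3 br br φ ∧ IsHom3 br br ψ := by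
  have leibniz_terms (x y z : A) :
      br (d x) (φ y) (φ z) + br (d y) (φ z) (φ x) + br (d z) (φ x) (φ y) =
        br (d x) (φ y) (φ z) + br (φ x) (d y) (φ z) + br (φ x) (φ y) (d z) := by
    rw [rotate_s18 (φ x) (d y) (φ z), ← rotate_s18 (d z) (φ x) (φ y)]
  simp only [IsHom3, IsDer3Along, tripleBr, Prod.mk.injEq, leibniz_terms, forall_and]

theorem IsDer3Along.symm_comp {A : Type*} [Add A] {br : A → A → A → A} {e : A ≃+ A} {d : A → A}
    (hd : IsDer3Along br e d) (he : IsHom3 br br e) : IsDer3Along br id (e.symm ∘ d) := fun x y z =>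
  e.injective <| by
    simp only [Function.comp_apply, id_eq, map_add, e.apply_symm_apply, hd x y z, he _ _ _]

section Extension

variable {R A M H : Type*} [Ring R] [AddCommGroup A] [Module R A] [AddCommGroup M] [Module R M]
  [AddCommGroup H] [Module R H] {ι : H →ₗ[R] A} {π : A →ₗ[R] M}

theorem sub_one_sq_eq_zero_of_ker_le_range (hker : LinearMap.ker π ≤ LinearMap.range ι)
    {φ : Module.End R A} (hι : ∀ h, φ (ι h) = ι h) (hπ : ∀ a, π (φ a) = π a) :
    (φ - 1) ^ 2 = 0 := by
  ext a
  obtain ⟨h, hh⟩ : φ a - a ∈ LinearMap.range ι := hker (by simp [hπ])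
  calc ((φ - 1) ^ 2 : Module.End R A) a = φ (φ a - a) - (φ a - a) := by simp [pow_two]
    _ = 0 := by rw [← hh, hι, sub_self]

theorem bijective_of_ker_le_range (hker : LinearMap.ker π ≤ LinearMap.range ι)
    {φ : Module.End R A} (hι : ∀ h, φ (ι h) = ι h) (hπ : ∀ a, π (φ a) = π a) :
    Function.Bijective φ := by
  have hnil : IsNilpotent (φ - 1) := ⟨2, sub_one_sq_eq_zero_of_ker_le_range hker hι hπ⟩
  rw [← Module.End.isUnit_iff]
  simpa using hnil.isUnit_add_one

theorem stmt18_general (hker : LinearMap.ker π ≤ LinearMap.range ι) {br : A → A → A → A}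
    (rotate_s18 : ∀ x y z, br y z x = br x y z) (σ : Module.End R M) (τ : Module.End R H) :
    (∃ δ : Module.End R A,
        IsDer3Along br id δ ∧ (∀ h, δ (ι h) = ι (τ h)) ∧ (∀ a, π (δ a) = σ (π a))) ↔
    (∃ g : A →ₗ[R] A × A × A,
        IsHom3 br (tripleBr br) g ∧
        (∀ h, g (ι h) = (ι (τ h), ι h, ι h)) ∧
        (∀ a, Prod.map π (Prod.map π π) (g a) = (σ (π a), π a, π a))) := by
  constructor
  · rintro ⟨δ, hδ, hδι, hδπ⟩
    refine ⟨δ.prod (LinearMap.id.prod LinearMap.id), ?_, fun h => by simp [hδι],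
      fun a => by simp [hδπ]⟩
    exact (isHom3_tripleBr_iff rotate_s18).2 ⟨hδ, fun _ _ _ => rfl, fun _ _ _ => rfl⟩
  · rintro ⟨g, hg, hgι, hgπ⟩
    let d : Module.End R A := LinearMap.fst R A (A × A) ∘ₗ g
    let φ : Module.End R A := LinearMap.fst R A A ∘ₗ LinearMap.snd R A (A × A) ∘ₗ g
    obtain ⟨hd, hφ, -⟩ := (isHom3_tripleBr_iff rotate_s18 (d := d) (φ := φ)).1 hg
    have hdι (h : H) : d (ι h) = ι (τ h) := congrArg Prod.fst (hgι h)
    have hdπ (a : A) : π (d a) = σ (π a) := congrArg Prod.fst (hgπ a)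
    have hφι (h : H) : φ (ι h) = ι h := congrArg (·.2.1) (hgι h)
    have hφπ (a : A) : π (φ a) = π a := congrArg (·.2.1) (hgπ a)
    let e : A ≃ₗ[R] A := .ofBijective φ (bijective_of_ker_le_range hker hφι hφπ)
    have heι (h : H) : e.symm (ι h) = ι h := e.symm_apply_eq.2 (hφι h).symm
    have heπ (a : A) : π (e.symm a) = π a := by
      rw [← hφπ (e.symm a)]
      exact congrArg π (e.apply_symm_apply a)
    refine ⟨e.symm ∘ₗ d, IsDer3Along.symm_comp (e := e.toAddEquiv) hd hφ, fun h => ?_, fun a => ?_⟩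
    · simp [hdι, heι]
    · simp [hdπ, heπ]

end Extension

/-- Theorem 4.9: `(σ,τ) ∈ Der(M) × Der(H)` extends to a derivation of the
`(μ,ρ,β)`-extension `A = M ⊕ H` iff the pair of 3-Lie homomorphisms
`(f_σ, f_τ)` extends to a 3-Lie homomorphism `g : A → A³` (i.e. `g∘i = (i×i×i)∘f_τ`
and `(p×p×p)∘g = f_σ∘p`). -/
theorem stmt18 {F M H : Type*} [Field F] [AddCommGroup M] [Module F M]
    [AddCommGroup H] [Module F H] (hchar : (2 : F) ≠ 0)
    (brM : M → M → M → M) (hM : IsThreeLieBracket F brM)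
    (brH : H → H → H → H) (hH : IsThreeLieBracket F brH)
    (μ : M →ₗ[F] M →ₗ[F] M →ₗ[F] H)
    (hμ12 : ∀ x y z : M, μ y x z = - μ x y z)
    (hμ23 : ∀ x y z : M, μ x z y = - μ x y z)
    (ρ : M →ₗ[F] M →ₗ[F] Module.End F H)
    (hρskew : ∀ x y : M, ρ x y = - ρ y x)
    (hρder : ∀ x y : M, IsDer3 F brH (ρ x y))
    (β : M →ₗ[F] H →ₗ[F] Module.End F H)
    (hβder : ∀ (x : M) (h : H), IsDer3 F brH (β x h))
    (hβskew : ∀ (x : M) (h1 h2 : H), β x h1 h2 = - β x h2 h1)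
    (hA : IsThreeLieBracket F (extBr F brM brH μ ρ β))
    (σ : Module.End F M) (hσ : IsDer3 F brM σ)
    (τ : Module.End F H) (hτ : IsDer3 F brH τ) :
    (∃ δ : Module.End F (M × H),
        IsDer3 F (extBr F brM brH μ ρ β) δ ∧
        (∀ h : H, δ (0, h) = (0, τ h)) ∧
        (∀ a : M × H, (δ a).1 = σ a.1)) ↔
    (∃ g : (M × H) →ₗ[F] ((M × H) × (M × H) × (M × H)),
        (∀ a b c : M × H,
          g (extBr F brM brH μ ρ β a b c)
            = tripleBr (extBr F brM brH μ ρ β) (g a) (g b) (g c)) ∧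
        (∀ h : H, g (0, h) = ((0, τ h), (0, h), (0, h))) ∧
        (∀ a : M × H, fst3 F M H (g a) = (σ a.1, a.1, a.1))) :=
  stmt18_general (ι := LinearMap.inr F M H) (π := LinearMap.fst F M H)
    (LinearMap.range_inr F M H).ge hA.rotate_s18 σ τ
end
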